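/- arXiv:2206.15368 — 5 statements merged into one kernel-verified Lean document; each statement's English description precedes it below -/
import Mathlib

section
/- (Convexity of the gradient, finite families) Let v_1, …, v_N : ℝ^d → ℂ be differentiable at a point x ∈ ℝ^d with Σ_{n=1}^N |v_n(x)|² > 0, and let f(y) = √(Σ_{n=1}^N |v_n(y)|²). Then f is differentiable at x and Σ_{n=1}^N |∇v_n(x)|² ≥ |∇f(x)|². -/
open scoped BigOperators

/-- `|∇f(x)|² = Σᵢ |∂ᵢ f(x)|²` for a function `f : ℝ^d → ℂ`. -/
noncomputable def gradSq {d : ℕ} (f : EuclideanSpace ℝ (Fin d) → ℂ)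
    (x : EuclideanSpace ℝ (Fin d)) : ℝ :=
  ∑ i : Fin d, ‖fderiv ℝ f x (EuclideanSpace.single i 1)‖ ^ 2

/-- `|∇g(x)|² = Σᵢ (∂ᵢ g(x))²` for a real-valued function `g : ℝ^d → ℝ`. -/
noncomputable def gradSqR {d : ℕ} (g : EuclideanSpace ℝ (Fin d) → ℝ)
    (x : EuclideanSpace ℝ (Fin d)) : ℝ :=
  ∑ i : Fin d, (fderiv ℝ g x (EuclideanSpace.single i 1)) ^ 2

/-!
With `V = (v₁, …, v_N)` regarded as a single map into an `ℓ²` direct sum, `√(Σₙ |vₙ|²)` is `‖V‖`.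
The norm of an inner product space is differentiable away from the origin and `1`-Lipschitz, so
`|∂ₑ‖V‖| ≤ ‖∂ₑV‖` in every direction `e`; summing the squares over the coordinate directions gives
the inequality between the gradients.
-/

theorem norm_fderiv_comp_apply_le_of_lipschitzWith {𝕜 E F G : Type*} [NontriviallyNormedField 𝕜]
    [NormedAddCommGroup E] [NormedSpace 𝕜 E] [NormedAddCommGroup F] [NormedSpace 𝕜 F]
    [NormedAddCommGroup G] [NormedSpace 𝕜 G] {g : F → G} {f : E → F} {x : E} {C : NNReal}
    (hg_lip : LipschitzWith C g) (hg : DifferentiableAt 𝕜 g (f x)) (hf : DifferentiableAt 𝕜 f x)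
    (e : E) :
    ‖fderiv 𝕜 (fun y => g (f y)) x e‖ ≤ C * ‖fderiv 𝕜 f x e‖ := by
  rw [fderiv_fun_comp x hg hf]
  exact (fderiv 𝕜 g (f x)).le_of_opNorm_le (norm_fderiv_le_of_lipschitz 𝕜 hg_lip) _

theorem abs_fderiv_norm_apply_le {E F : Type*} [NormedAddCommGroup E] [NormedSpace ℝ E]
    [NormedAddCommGroup F] [InnerProductSpace ℝ F] {f : E → F} {x : E}
    (hf : DifferentiableAt ℝ f x) (hx : f x ≠ 0) (e : E) :
    |fderiv ℝ (fun y => ‖f y‖) x e| ≤ ‖fderiv ℝ f x e‖ := by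
  have norm_diff : DifferentiableAt ℝ (fun z : F => ‖z‖) (f x) := differentiableAt_id.norm ℝ hx
  simpa only [Real.norm_eq_abs, NNReal.coe_one, one_mul] using
    norm_fderiv_comp_apply_le_of_lipschitzWith lipschitzWith_one_norm norm_diff hf e

theorem fderiv_piLp_apply {𝕜 ι E : Type*} {G : ι → Type*} [NontriviallyNormedField 𝕜] [Finite ι]
    [NormedAddCommGroup E] [NormedSpace 𝕜 E] [∀ i, NormedAddCommGroup (G i)]
    [∀ i, NormedSpace 𝕜 (G i)] {p : ENNReal} [Fact (1 ≤ p)] {f : E → PiLp p G} {x : E}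
    (hf : DifferentiableAt 𝕜 f x) (e : E) (i : ι) :
    fderiv 𝕜 f x e i = fderiv 𝕜 (fun y => f y i) x e := by
  have := Fintype.ofFinite ι
  have coord_deriv := (PiLp.hasFDerivAt_apply (𝕜 := 𝕜) p (f x) i).comp x hf.hasFDerivAt
  exact (congrArg (· e) coord_deriv.fderiv).symm

theorem gradient_convexity_finite_general {ι E : Type*} {G : ι → Type*} [Fintype ι]
    [NormedAddCommGroup E] [NormedSpace ℝ E] [∀ n, NormedAddCommGroup (G n)]
    [∀ n, InnerProductSpace ℝ (G n)] {v : ∀ n, E → G n} {x : E}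
    (hdiff : ∀ n, DifferentiableAt ℝ (v n) x) (hpos : 0 < ∑ n, ‖v n x‖ ^ 2) :
    DifferentiableAt ℝ (fun y => Real.sqrt (∑ n, ‖v n y‖ ^ 2)) x ∧
      ∀ e, fderiv ℝ (fun y => Real.sqrt (∑ n, ‖v n y‖ ^ 2)) x e ^ 2 ≤
        ∑ n, ‖fderiv ℝ (v n) x e‖ ^ 2 := by
  let V : E → PiLp 2 G := fun y => WithLp.toLp 2 fun n => v n y
  have norm_V : (fun y => Real.sqrt (∑ n, ‖v n y‖ ^ 2)) = fun y => ‖V y‖ :=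
    funext fun y => (PiLp.norm_eq_of_L2 (V y)).symm
  have V_diff : DifferentiableAt ℝ V x := (differentiableAt_piLp 2).2 hdiff
  have V_ne_zero : V x ≠ 0 := by
    rw [← norm_pos_iff, PiLp.norm_eq_of_L2]
    exact Real.sqrt_pos.2 hpos
  rw [norm_V]
  refine ⟨V_diff.norm ℝ V_ne_zero, fun e => ?_⟩
  calc fderiv ℝ (fun y => ‖V y‖) x e ^ 2
      ≤ ‖fderiv ℝ V x e‖ ^ 2 :=
        sq_le_sq.2 ((abs_fderiv_norm_apply_le V_diff V_ne_zero e).trans_eq (abs_norm _).symm)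
    _ = ∑ n, ‖fderiv ℝ (v n) x e‖ ^ 2 := by
        simp only [PiLp.norm_sq_eq_of_L2, fderiv_piLp_apply V_diff, V]

/-- **Convexity of the gradient (finite families)**: if `v₁, …, v_N` are differentiable
at `x` and `Σₙ |vₙ(x)|² > 0`, then `f = √(Σₙ |vₙ|²)` is differentiable at `x` and
`Σₙ |∇vₙ(x)|² ≥ |∇f(x)|²`. -/
theorem gradient_convexity_finite (d : ℕ) (hd : 1 ≤ d) (N : ℕ)
    (v : Fin N → EuclideanSpace ℝ (Fin d) → ℂ) (x : EuclideanSpace ℝ (Fin d))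
    (hdiff : ∀ n, DifferentiableAt ℝ (v n) x)
    (hpos : 0 < ∑ n, ‖v n x‖ ^ 2) :
    DifferentiableAt ℝ (fun y => Real.sqrt (∑ n, ‖v n y‖ ^ 2)) x ∧
      gradSqR (fun y => Real.sqrt (∑ n, ‖v n y‖ ^ 2)) x ≤ ∑ n, gradSq (v n) x := by
  obtain ⟨sqrt_diff, directional_le⟩ := gradient_convexity_finite_general hdiff hpos
  exact ⟨sqrt_diff, (Finset.sum_le_sum fun _ _ => directional_le _).trans_eq Finset.sum_comm⟩
end

section
/- (Local uncertainty principle) There exists a constant C_d > 0 depending only on the dimension d such that for every open ball B ⊂ ℝ^d and every continuously differentiable function g : ℝ^d → ℂ with ∫_B |g|² > 0, one has ∫_B |∇g(x)|² dx ≥ (1/C_d) · (∫_B |g(x)|^{2(1+2/d)} dx) / (∫_B |g(x)|² dx)^{2/d} − C_d |B|^{−2/d} ∫_B |g(x)|² dx, where |B| denotes the Lebesgue measure of B. -/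
open MeasureTheory
open scoped BigOperators

open Metric Module Set
open scoped ENNReal ProbabilityTheory

/-! Let `n` be the dimension. Fix `0 < τ ≤ 1 / 2` and compare `g x` with its average over the
points `x + τ • (y - x)`, where `y` is uniform in the ball `B`. By Jensen's inequality and two
changes of variables, such averages map `L^s` to `L^(s(1+p))`, with a factor `τ ^ (-n p)` on the
`s(1+p)`-th powers. The difference is the integral of the gradient along the segment, that is, an
integral over `σ ∈ [0, τ]` of averages of `|∇g|`; substituting `σ = τ u ^ (m+1)` makes the same
bound uniform in `u ∈ (0, 1]` as soon as `m` is large, and `m = n` suffices for `p = s / n`. With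
`t = τ ^ s`, `N = ∫ |g|^s` and `D = ∫ |∇g|^s`, this gives
`∫ |g|^(s(1+p)) ≲ |B|^(-p) (N^(1+p) / t + t^p (|B|^p D)^(1+p))`,
and the best admissible `t` yields the theorem. -/

section Real

lemma pow_rpow_mul_mul_pow_rpow_neg_le {m : ℕ} {τ u a q : ℝ} (hτ : 0 < τ) (hu : u ∈ Ioc 0 1)
    (h : a * (m + 1 : ℕ) ≤ m * q) : (u ^ m) ^ q * (τ * u ^ (m + 1)) ^ (-a) ≤ τ ^ (-a) := by
  have hu₀ : 0 < u := hu.1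
  rw [Real.mul_rpow hτ.le (by positivity), mul_left_comm, ← Real.rpow_natCast_mul hu₀.le,
    ← Real.rpow_natCast_mul hu₀.le, ← Real.rpow_add hu₀]
  exact mul_le_of_le_one_right (by positivity) (Real.rpow_le_one hu₀.le hu.2 (by linarith))

lemma le_mul_of_forall_le_div_add_mul {A N D P p δ : ℝ} (hA : 0 ≤ A) (hN : 0 < N) (hD : 0 ≤ D)
    (hp : 0 ≤ p) (hδ : 0 < δ)
    (h : ∀ t ∈ Ioc 0 δ, P ≤ A * (N ^ (1 + p) / t + t ^ p * D ^ (1 + p))) :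
    P ≤ 2 * A * N ^ p * (D + N / δ) := by
  set Q := D + N / δ
  have hQ : 0 < Q := by positivity
  have hDQ : D ≤ Q := le_add_of_nonneg_right (by positivity)
  have hNQ : N / Q ≤ δ := by
    rw [div_le_comm₀ hQ hδ]
    exact le_add_of_nonneg_left hD
  calc P ≤ A * (N ^ (1 + p) / (N / Q) + (N / Q) ^ p * D ^ (1 + p)) := h _ ⟨by positivity, hNQ⟩
    _ ≤ A * (N ^ (1 + p) / (N / Q) + (N / Q) ^ p * Q ^ (1 + p)) := by gcongr
    _ = 2 * A * N ^ p * Q := by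
      rw [Real.rpow_one_add' hN.le (by positivity), Real.rpow_one_add' hQ.le (by positivity),
        Real.div_rpow hN.le hQ.le]
      field_simp
      ring

lemma one_div_mul_sub_mul_le {A B D X Y : ℝ} (hA : 0 ≤ A) (hB : 0 ≤ B) (hD : 0 ≤ D) (hY : 0 ≤ Y)
    (h : X ≤ A * D + B * Y) : 1 / (1 + A + B) * X - (1 + A + B) * Y ≤ D := by
  rw [sub_le_iff_le_add, one_div, inv_mul_le_iff₀ (by positivity), mul_add, ← mul_assoc]
  refine h.trans ?_
  gcongr <;> nlinarith

end Real

section Lebesgue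

variable {α : Type*} [MeasurableSpace α] {μ : Measure α}

lemma rpow_lintegral_le_lintegral_rpow [IsProbabilityMeasure μ] {f : α → ℝ≥0∞}
    (hf : AEMeasurable f μ) {s : ℝ} (hs : 1 ≤ s) :
    (∫⁻ a, f a ∂μ) ^ s ≤ ∫⁻ a, f a ^ s ∂μ := by
  have hs₀ : 0 < s := one_pos.trans_le hs
  have h := eLpNorm'_le_eLpNorm'_of_exponent_le (μ := μ) one_pos hs hf.aestronglyMeasurable
  simp only [eLpNorm', enorm_eq_self, ENNReal.rpow_one, one_div, inv_one] at h
  rwa [ENNReal.le_rpow_inv_iff hs₀] at h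

lemma lintegral_indicator_rpow {t : Set α} (ht : MeasurableSet t) (f : α → ℝ≥0∞) {s : ℝ}
    (hs : 0 < s) : ∫⁻ a, t.indicator f a ^ s ∂μ = ∫⁻ a in t, f a ^ s ∂μ := by
  rw [← lintegral_indicator ht]
  exact lintegral_congr fun a ↦
    congrFun (t.indicator_comp_of_zero (g := (· ^ s)) (ENNReal.zero_rpow_of_pos hs)) a |>.symm

lemma lintegral_add_mul_rpow_le {f g : α → ℝ≥0∞} (hf : AEMeasurable f μ) {M : ℝ≥0∞} (hM : M ≠ ∞)
    {q : ℝ} (hq : 1 ≤ q) :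
    ∫⁻ a, (f a + M * g a) ^ q ∂μ ≤
      2 ^ (q - 1) * (∫⁻ a, f a ^ q ∂μ + M ^ q * ∫⁻ a, g a ^ q ∂μ) := by
  have hq₀ : 0 ≤ q := zero_le_one.trans hq
  rw [← lintegral_const_mul' _ _ (by finiteness), ← lintegral_add_left' (by fun_prop),
    ← lintegral_const_mul' _ _ (by finiteness)]
  refine lintegral_mono fun a ↦ ?_
  rw [← ENNReal.mul_rpow_of_nonneg _ _ hq₀]
  exact ENNReal.rpow_add_le_mul_rpow_add_rpow _ _ hq

lemma cond_le_inv_smul (μ : Measure α) (t : Set α) : μ[|t] ≤ (μ t)⁻¹ • μ := by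
  rw [ProbabilityTheory.cond]
  gcongr
  exact Measure.restrict_le_self

variable {F : Type*} [NormedAddCommGroup F]

lemma measurable_indicator_enorm [TopologicalSpace α] [BorelSpace α] {t : Set α} {f : α → F}
    (ht : MeasurableSet t) (hf : ContinuousOn f t) : Measurable (t.indicator fun a ↦ ‖f a‖ₑ) := by
  classical
  simpa using ContinuousOn.measurable_piecewise hf.enorm (continuous_zero.continuousOn (s := tᶜ)) ht

lemma integral_norm_rpow_eq_toReal_lintegral {f : α → F}
    (hf : AEStronglyMeasurable f μ) {s : ℝ} (hs : 0 ≤ s) :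
    ∫ a, ‖f a‖ ^ s ∂μ = (∫⁻ a, ‖f a‖ₑ ^ s ∂μ).toReal := by
  rw [integral_eq_lintegral_of_nonneg_ae (ae_of_all _ fun a ↦ by positivity)
    (by simpa using (hf.norm.aemeasurable.pow_const s).aestronglyMeasurable)]
  simp_rw [← ENNReal.ofReal_rpow_of_nonneg (norm_nonneg _) hs, ofReal_norm]

end Lebesgue

section SegmentAverage

variable {E : Type*} [NormedAddCommGroup E] [NormedSpace ℝ E] [MeasurableSpace E] [BorelSpace E]

/-- The `ν`-average over `y` of the values of `f` at the point dividing the segment from `x` to `y`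
in the ratio `σ : 1 - σ`. It plays the role of a mollification of `f` at scale `σ` that, for `ν`
supported in a convex set, uses only the values of `f` on that set. -/
noncomputable def segmentAverage (ν : Measure E) (σ : ℝ) (f : E → ℝ≥0∞) (x : E) : ℝ≥0∞ :=
  ∫⁻ y, f (x + σ • (y - x)) ∂ν

variable {μ ν : Measure E} {κ : ℝ≥0∞} {f : E → ℝ≥0∞} {s p σ τ : ℝ}

lemma rpow_segmentAverage_le [IsProbabilityMeasure ν] (hf : Measurable f) (hs : 1 ≤ s) (x : E) :
    segmentAverage ν σ f x ^ s ≤ segmentAverage ν σ (fun z ↦ f z ^ s) x :=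
  rpow_lintegral_le_lintegral_rpow (by fun_prop) hs

variable [FiniteDimensional ℝ E]

@[fun_prop]
lemma measurable_segmentAverage {β : Type*} [MeasurableSpace β] [SFinite ν] (hf : Measurable f)
    {a : β → ℝ} {b : β → E} (ha : Measurable a) (hb : Measurable b) :
    Measurable fun z ↦ segmentAverage ν (a z) f (b z) :=
  Measurable.lintegral_prod_right (by fun_prop)

variable [μ.IsAddHaarMeasure]

lemma lintegral_comp_add_smul (f : E → ℝ≥0∞) (a : E) (hσ : σ ≠ 0) :
    ∫⁻ y, f (a + σ • y) ∂μ = ENNReal.ofReal |(σ ^ finrank ℝ E)⁻¹| * ∫⁻ y, f y ∂μ := by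
  have h_map : ∫⁻ z, f (a + z) ∂(μ.map (σ • ·)) = ∫⁻ y, f (a + σ • y) ∂μ :=
    lintegral_map_equiv _ (Homeomorph.smulOfNeZero σ hσ).toMeasurableEquiv
  rw [← h_map, Measure.map_addHaar_smul μ hσ, lintegral_smul_measure, lintegral_add_left_eq_self,
    smul_eq_mul]

lemma segmentAverage_le_of_le_smul (hν : ν ≤ κ • μ) (hσ : 0 < σ) (x : E) :
    segmentAverage ν σ f x ≤ κ * ENNReal.ofReal (σ ^ finrank ℝ E)⁻¹ * ∫⁻ z, f z ∂μ := by
  calc segmentAverage ν σ f x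
    _ ≤ ∫⁻ y, f (x + σ • (y - x)) ∂(κ • μ) := lintegral_mono' hν le_rfl
    _ = κ * ∫⁻ y, f ((x - σ • x) + σ • y) ∂μ := by
      simp only [lintegral_smul_measure, smul_eq_mul, smul_sub, add_sub, sub_add_eq_add_sub]
    _ = κ * ENNReal.ofReal (σ ^ finrank ℝ E)⁻¹ * ∫⁻ z, f z ∂μ := by
      rw [lintegral_comp_add_smul f _ hσ.ne', abs_of_pos (by positivity), mul_assoc]

lemma lintegral_segmentAverage [IsProbabilityMeasure ν] (hf : Measurable f) (hσ : σ < 1) :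
    ∫⁻ x, segmentAverage ν σ f x ∂μ
      = ENNReal.ofReal ((1 - σ) ^ finrank ℝ E)⁻¹ * ∫⁻ z, f z ∂μ := by
  have hσ' : 0 < 1 - σ := sub_pos.2 hσ
  have h_inner (y : E) : ∫⁻ x, f (x + σ • (y - x)) ∂μ
      = ENNReal.ofReal ((1 - σ) ^ finrank ℝ E)⁻¹ * ∫⁻ z, f z ∂μ := by
    rw [← abs_of_pos (inv_pos.2 (pow_pos hσ' _)), ← lintegral_comp_add_smul f (σ • y) hσ'.ne']
    congr! 3 with x
    module
  simp_rw [segmentAverage]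
  rw [lintegral_lintegral_swap (by fun_prop)]
  simp [h_inner]

/-- Jensen reduces to `s = 1`; of the `1 + p` factors, `p` are bounded pointwise by changing
variables in `y`, and the last one is integrated by changing variables in `x`. -/
lemma lintegral_segmentAverage_rpow_le [IsProbabilityMeasure ν] (hν : ν ≤ κ • μ)
    (hf : Measurable f) (hs : 1 ≤ s) (hp : 0 ≤ p) (hσ : 0 < σ) (hσ' : σ ≤ 1 / 2) :
    ∫⁻ x, segmentAverage ν σ f x ^ (s * (1 + p)) ∂μ ≤
      2 ^ finrank ℝ E * κ ^ p * ENNReal.ofReal (σ ^ (-(finrank ℝ E * p))) *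
        (∫⁻ z, f z ^ s ∂μ) ^ (1 + p) := by
  set n := finrank ℝ E
  set I := ∫⁻ z, f z ^ s ∂μ
  have h_point (x : E) : segmentAverage ν σ f x ^ (s * (1 + p)) ≤
      (κ * ENNReal.ofReal (σ ^ n)⁻¹ * I) ^ p * segmentAverage ν σ (fun z ↦ f z ^ s) x := by
    have h_jensen := rpow_segmentAverage_le (ν := ν) (σ := σ) hf hs x
    rw [ENNReal.rpow_mul, add_comm, ENNReal.rpow_add_of_nonneg _ _ hp zero_le_one, ENNReal.rpow_one]
    gcongr
    exact h_jensen.trans (segmentAverage_le_of_le_smul hν hσ x)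
  have h_contract : ENNReal.ofReal ((1 - σ) ^ n)⁻¹ ≤ 2 ^ n := by
    rw [← inv_pow, ENNReal.ofReal_pow (inv_nonneg.2 (by linarith))]
    gcongr
    rw [ENNReal.ofReal_le_ofNat]
    exact inv_le_of_inv_le₀ two_pos (by linarith)
  have h_scale : ENNReal.ofReal (σ ^ n)⁻¹ ^ p = ENNReal.ofReal (σ ^ (-(n * p))) := by
    rw [ENNReal.ofReal_rpow_of_pos (by positivity), Real.inv_rpow (by positivity),
      ← Real.rpow_natCast_mul hσ.le, Real.rpow_neg hσ.le]
  calc ∫⁻ x, segmentAverage ν σ f x ^ (s * (1 + p)) ∂μ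
    _ ≤ ∫⁻ x, (κ * ENNReal.ofReal (σ ^ n)⁻¹ * I) ^ p *
          segmentAverage ν σ (fun z ↦ f z ^ s) x ∂μ := lintegral_mono h_point
    _ = (κ * ENNReal.ofReal (σ ^ n)⁻¹ * I) ^ p * (ENNReal.ofReal ((1 - σ) ^ n)⁻¹ * I) := by
      rw [lintegral_const_mul _ (by fun_prop),
        lintegral_segmentAverage (by fun_prop) (by linarith)]
    _ ≤ (κ * ENNReal.ofReal (σ ^ n)⁻¹ * I) ^ p * (2 ^ n * I) := by gcongr
    _ = 2 ^ n * κ ^ p * ENNReal.ofReal (σ ^ (-(n * p))) * I ^ (1 + p) := by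
      rw [ENNReal.mul_rpow_of_nonneg _ _ hp, ENNReal.mul_rpow_of_nonneg _ _ hp, h_scale,
        ENNReal.rpow_add_of_nonneg _ _ zero_le_one hp, ENNReal.rpow_one]
      ring

lemma lintegral_lintegral_segmentAverage_rpow_le {m : ℕ} [IsProbabilityMeasure ν] (hν : ν ≤ κ • μ)
    (hf : Measurable f) (hs : 1 ≤ s) (hp : 0 ≤ p) (hτ : 0 < τ) (hτ' : τ ≤ 1 / 2)
    (hm : finrank ℝ E * p * (m + 1) ≤ m * (s * (1 + p))) :
    ∫⁻ x, (∫⁻ u in Ioc (0 : ℝ) 1, ENNReal.ofReal (u ^ m) *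
        segmentAverage ν (τ * u ^ (m + 1)) f x) ^ (s * (1 + p)) ∂μ ≤
      2 ^ finrank ℝ E * κ ^ p * ENNReal.ofReal (τ ^ (-(finrank ℝ E * p))) *
        (∫⁻ z, f z ^ s ∂μ) ^ (1 + p) := by
  set n := finrank ℝ E
  set q := s * (1 + p)
  set I := ∫⁻ z, f z ^ s ∂μ
  have hq : 1 ≤ q := by nlinarith
  have : IsProbabilityMeasure (volume.restrict (Ioc (0 : ℝ) 1)) := ⟨by simp⟩
  have h_slice (u : ℝ) (hu : u ∈ Ioc 0 1) :
      ∫⁻ x, (ENNReal.ofReal (u ^ m) * segmentAverage ν (τ * u ^ (m + 1)) f x) ^ q ∂μ ≤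
        2 ^ n * κ ^ p * ENNReal.ofReal (τ ^ (-(n * p))) * I ^ (1 + p) := by
    have hu₀ : 0 < u := hu.1
    have hσ : τ * u ^ (m + 1) ≤ 1 / 2 :=
      (mul_le_of_le_one_right hτ.le (pow_le_one₀ hu₀.le hu.2)).trans hτ'
    simp_rw [ENNReal.mul_rpow_of_nonneg _ _ (zero_le_one.trans hq)]
    rw [lintegral_const_mul _ (by fun_prop), ENNReal.ofReal_rpow_of_pos (by positivity)]
    calc ENNReal.ofReal ((u ^ m) ^ q) * ∫⁻ x, segmentAverage ν (τ * u ^ (m + 1)) f x ^ q ∂μ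
      _ ≤ ENNReal.ofReal ((u ^ m) ^ q) * (2 ^ n * κ ^ p *
            ENNReal.ofReal ((τ * u ^ (m + 1)) ^ (-(n * p))) * I ^ (1 + p)) := by
        gcongr
        exact lintegral_segmentAverage_rpow_le hν hf hs hp (by positivity) hσ
      _ = 2 ^ n * κ ^ p * ENNReal.ofReal ((u ^ m) ^ q * (τ * u ^ (m + 1)) ^ (-(n * p))) *
            I ^ (1 + p) := by
        rw [ENNReal.ofReal_mul (by positivity)]
        ring
      _ ≤ 2 ^ n * κ ^ p * ENNReal.ofReal (τ ^ (-(n * p))) * I ^ (1 + p) := by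
        gcongr
        exact pow_rpow_mul_mul_pow_rpow_neg_le hτ hu (by exact_mod_cast hm)
  calc _ ≤ ∫⁻ x, (∫⁻ u in Ioc (0 : ℝ) 1, (ENNReal.ofReal (u ^ m) *
          segmentAverage ν (τ * u ^ (m + 1)) f x) ^ q) ∂μ :=
        lintegral_mono fun x ↦ rpow_lintegral_le_lintegral_rpow (by fun_prop) hq
    _ = ∫⁻ u in Ioc (0 : ℝ) 1, ∫⁻ x, (ENNReal.ofReal (u ^ m) *
          segmentAverage ν (τ * u ^ (m + 1)) f x) ^ q ∂μ := lintegral_lintegral_swap (by fun_prop)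
    _ ≤ ∫⁻ _ in Ioc (0 : ℝ) 1,
          2 ^ n * κ ^ p * ENNReal.ofReal (τ ^ (-(n * p))) * I ^ (1 + p) :=
        setLIntegral_mono' measurableSet_Ioc h_slice
    _ = 2 ^ n * κ ^ p * ENNReal.ofReal (τ ^ (-(n * p))) * I ^ (1 + p) := by simp

end SegmentAverage

section Convex

variable {E F : Type*} [NormedAddCommGroup E] [NormedSpace ℝ E] [NormedAddCommGroup F]
  [NormedSpace ℝ F] {Ω : Set E} {g : E → F} {x : E} {τ : ℝ}

/-- Parametrizing the segment by `u ↦ x + (τ * u ^ (m + 1)) • v` produces the weight `u ^ m`,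
which absorbs the blow-up of `lintegral_segmentAverage_rpow_le` as `σ → 0`. -/
lemma enorm_le_enorm_add_lintegral_fderiv (hΩ : IsOpen Ω) (hg : ContDiffOn ℝ 1 g Ω) {v : E}
    (hτ : 0 ≤ τ) (h_seg : ∀ t ∈ Icc 0 τ, x + t • v ∈ Ω) (m : ℕ) :
    ‖g x‖ₑ ≤ ‖g (x + τ • v)‖ₑ + ENNReal.ofReal ((m + 1) * ‖v‖ * τ) *
      ∫⁻ u in Ioc (0 : ℝ) 1, ENNReal.ofReal (u ^ m) *
        ‖fderiv ℝ g (x + (τ * u ^ (m + 1)) • v)‖ₑ := by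
  set γ : ℝ → E := fun u ↦ x + (τ * u ^ (m + 1)) • v
  have h_mem (u : ℝ) (hu : u ∈ Icc 0 1) : γ u ∈ Ω :=
    h_seg _ ⟨by have := hu.1; positivity, mul_le_of_le_one_right hτ (pow_le_one₀ hu.1 hu.2)⟩
  have h_deriv (u : ℝ) (hu : u ∈ Icc 0 1) :
      HasDerivAt (g ∘ γ) (fderiv ℝ g (γ u) ((τ * ((m + 1 : ℕ) * u ^ m)) • v)) u := by
    have hγ : HasDerivAt γ ((τ * ((m + 1 : ℕ) * u ^ m)) • v) u :=
      (((hasDerivAt_pow (m + 1) u).const_mul τ).smul_const v).const_add x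
    have hgu := (hg.contDiffAt (hΩ.mem_nhds (h_mem u hu))).differentiableAt one_ne_zero
    exact hgu.hasFDerivAt.comp_hasDerivAt u hγ
  have h_speed (u : ℝ) (hu : u ∈ Icc 0 1) : ‖deriv (g ∘ γ) u‖ₑ ≤
      ENNReal.ofReal ((m + 1) * ‖v‖ * τ) * (ENNReal.ofReal (u ^ m) * ‖fderiv ℝ g (γ u)‖ₑ) := by
    have hu₀ : 0 ≤ u := hu.1
    rw [(h_deriv u hu).deriv, ← ofReal_norm, ← ofReal_norm, ← ENNReal.ofReal_mul (by positivity),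
      ← ENNReal.ofReal_mul (by positivity)]
    refine ENNReal.ofReal_le_ofReal ((ContinuousLinearMap.le_opNorm _ _).trans_eq ?_)
    rw [norm_smul, Real.norm_of_nonneg (by positivity)]
    push_cast
    ring
  have h_ftc : ‖g (x + τ • v) - g x‖ₑ ≤ ∫⁻ u in Icc (0 : ℝ) 1, ‖deriv (g ∘ γ) u‖ₑ := by
    have h_smooth : ContDiffOn ℝ 1 (g ∘ γ) (Icc 0 1) := hg.comp (by fun_prop) h_mem
    simpa [γ] using enorm_sub_le_lintegral_deriv_of_contDiffOn_Icc h_smooth zero_le_one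
  calc ‖g x‖ₑ = ‖g (x + τ • v) - (g (x + τ • v) - g x)‖ₑ := by rw [sub_sub_cancel]
    _ ≤ ‖g (x + τ • v)‖ₑ + ‖g (x + τ • v) - g x‖ₑ := enorm_sub_le
    _ ≤ ‖g (x + τ • v)‖ₑ + ∫⁻ u in Icc (0 : ℝ) 1, ENNReal.ofReal ((m + 1) * ‖v‖ * τ) *
          (ENNReal.ofReal (u ^ m) * ‖fderiv ℝ g (γ u)‖ₑ) := by
      gcongr
      exact h_ftc.trans (setLIntegral_mono' measurableSet_Icc h_speed)
    _ = _ := by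
      rw [lintegral_const_mul' _ _ ENNReal.ofReal_ne_top, setLIntegral_congr Ioc_ae_eq_Icc]

lemma enorm_le_indicator_add_lintegral_indicator_fderiv (hΩ : IsOpen Ω) (hΩc : Convex ℝ Ω)
    (hΩb : Bornology.IsBounded Ω) (hg : ContDiffOn ℝ 1 g Ω) {y : E} (hx : x ∈ Ω) (hy : y ∈ Ω)
    (hτ : 0 ≤ τ) (hτ' : τ ≤ 1) (m : ℕ) :
    ‖g x‖ₑ ≤ Ω.indicator (fun z ↦ ‖g z‖ₑ) (x + τ • (y - x)) +
      ENNReal.ofReal ((m + 1) * diam Ω * τ) * ∫⁻ u in Ioc (0 : ℝ) 1, ENNReal.ofReal (u ^ m) *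
        Ω.indicator (fun z ↦ ‖fderiv ℝ g z‖ₑ) (x + (τ * u ^ (m + 1)) • (y - x)) := by
  have h_mem (t : ℝ) (ht : t ∈ Icc 0 τ) : x + t • (y - x) ∈ Ω :=
    hΩc.add_smul_sub_mem hx hy ⟨ht.1, ht.2.trans hτ'⟩
  have h_diam : ‖y - x‖ ≤ diam Ω := dist_eq_norm y x ▸ dist_le_diam_of_mem hΩb hy hx
  refine (enorm_le_enorm_add_lintegral_fderiv hΩ hg hτ h_mem m).trans ?_
  gcongr ?_ + ENNReal.ofReal ((m + 1) * ?_ * τ) * ?_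
  · rw [indicator_of_mem (h_mem τ (right_mem_Icc.2 hτ))]
  · refine setLIntegral_mono' measurableSet_Ioc fun u hu ↦ ?_
    have hu₀ : 0 ≤ u := hu.1.le
    rw [indicator_of_mem (h_mem _ ⟨by positivity,
      mul_le_of_le_one_right hτ (pow_le_one₀ hu₀ hu.2)⟩)]

variable [MeasurableSpace E] [BorelSpace E] [FiniteDimensional ℝ E]
  {μ : Measure E} [μ.IsAddHaarMeasure]

lemma enorm_le_segmentAverage_add (hΩ : IsOpen Ω) (hΩc : Convex ℝ Ω) (hΩb : Bornology.IsBounded Ω)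
    (hg : ContDiffOn ℝ 1 g Ω) (hx : x ∈ Ω) (hτ : 0 ≤ τ) (hτ' : τ ≤ 1) (m : ℕ) :
    ‖g x‖ₑ ≤ segmentAverage μ[|Ω] τ (Ω.indicator fun z ↦ ‖g z‖ₑ) x +
      ENNReal.ofReal ((m + 1) * diam Ω * τ) * ∫⁻ u in Ioc (0 : ℝ) 1, ENNReal.ofReal (u ^ m) *
        segmentAverage μ[|Ω] (τ * u ^ (m + 1)) (Ω.indicator fun z ↦ ‖fderiv ℝ g z‖ₑ) x := by
  set ν := μ[|Ω]
  set G := Ω.indicator fun z ↦ ‖g z‖ₑ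
  set H := Ω.indicator fun z ↦ ‖fderiv ℝ g z‖ₑ
  have hG : Measurable G := measurable_indicator_enorm hΩ.measurableSet hg.continuousOn
  have hH : Measurable H := measurable_indicator_enorm hΩ.measurableSet
    (hg.continuousOn_fderiv_of_isOpen hΩ le_rfl)
  have : IsProbabilityMeasure ν := ProbabilityTheory.cond_isProbabilityMeasure_of_finite
    (hΩ.measure_pos μ ⟨x, hx⟩).ne' hΩb.measure_lt_top.ne
  calc ‖g x‖ₑ = ∫⁻ _, ‖g x‖ₑ ∂ν := by simp
    _ ≤ ∫⁻ y, (G (x + τ • (y - x)) + ENNReal.ofReal ((m + 1) * diam Ω * τ) *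
          ∫⁻ u in Ioc (0 : ℝ) 1, ENNReal.ofReal (u ^ m) *
            H (x + (τ * u ^ (m + 1)) • (y - x))) ∂ν :=
      lintegral_mono_ae ((ProbabilityTheory.ae_cond_mem hΩ.measurableSet).mono fun y hy ↦
        enorm_le_indicator_add_lintegral_indicator_fderiv hΩ hΩc hΩb hg hx hy hτ hτ' m)
    _ = _ := by
      rw [lintegral_add_left (by fun_prop), lintegral_const_mul' _ _ ENNReal.ofReal_ne_top,
        lintegral_lintegral_swap (by fun_prop)]
      simp_rw [lintegral_const_mul' _ _ ENNReal.ofReal_ne_top, segmentAverage]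

lemma setLIntegral_enorm_rpow_le {s p : ℝ} {m : ℕ} (hΩ : IsOpen Ω) (hΩc : Convex ℝ Ω)
    (hΩb : Bornology.IsBounded Ω) (hΩn : Ω.Nonempty) (hg : ContDiffOn ℝ 1 g Ω)
    (hs : 1 ≤ s) (hp : 0 ≤ p) (hm : finrank ℝ E * p * (m + 1) ≤ m * (s * (1 + p)))
    (hτ : 0 < τ) (hτ' : τ ≤ 1 / 2) :
    ∫⁻ x in Ω, ‖g x‖ₑ ^ (s * (1 + p)) ∂μ ≤
      2 ^ (s * (1 + p) - 1) *
        (2 ^ finrank ℝ E * (μ Ω)⁻¹ ^ p * ENNReal.ofReal (τ ^ (-(finrank ℝ E * p)))) *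
        ((∫⁻ x in Ω, ‖g x‖ₑ ^ s ∂μ) ^ (1 + p) +
          ENNReal.ofReal ((m + 1) * diam Ω * τ) ^ (s * (1 + p)) *
            (∫⁻ x in Ω, ‖fderiv ℝ g x‖ₑ ^ s ∂μ) ^ (1 + p)) := by
  set q := s * (1 + p)
  have hs₀ : 0 < s := one_pos.trans_le hs
  have hq : 1 ≤ q := by nlinarith
  set G := Ω.indicator fun z ↦ ‖g z‖ₑ
  set H := Ω.indicator fun z ↦ ‖fderiv ℝ g z‖ₑ
  have hG : Measurable G := measurable_indicator_enorm hΩ.measurableSet hg.continuousOn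
  have hH : Measurable H := measurable_indicator_enorm hΩ.measurableSet
    (hg.continuousOn_fderiv_of_isOpen hΩ le_rfl)
  have : IsProbabilityMeasure μ[|Ω] := ProbabilityTheory.cond_isProbabilityMeasure_of_finite
    (hΩ.measure_pos μ hΩn).ne' hΩb.measure_lt_top.ne
  have h_value := lintegral_segmentAverage_rpow_le (cond_le_inv_smul μ Ω) hG hs hp hτ hτ'
  have h_grad := lintegral_lintegral_segmentAverage_rpow_le (cond_le_inv_smul μ Ω) hH hs hp hτ hτ'
    hm
  rw [lintegral_indicator_rpow hΩ.measurableSet _ hs₀] at h_value h_grad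
  set M := ENNReal.ofReal ((m + 1) * diam Ω * τ)
  set a := segmentAverage μ[|Ω] τ G
  set b : E → ℝ≥0∞ := fun x ↦ ∫⁻ u in Ioc (0 : ℝ) 1, ENNReal.ofReal (u ^ m) *
    segmentAverage μ[|Ω] (τ * u ^ (m + 1)) H x
  calc ∫⁻ x in Ω, ‖g x‖ₑ ^ q ∂μ
    _ ≤ ∫⁻ x in Ω, (a x + M * b x) ^ q ∂μ :=
      setLIntegral_mono' hΩ.measurableSet fun x hx ↦ by
        gcongr
        exact enorm_le_segmentAverage_add hΩ hΩc hΩb hg hx hτ.le (by linarith) m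
    _ ≤ ∫⁻ x, (a x + M * b x) ^ q ∂μ := setLIntegral_le_lintegral _ _
    _ ≤ 2 ^ (q - 1) * (∫⁻ x, a x ^ q ∂μ + M ^ q * ∫⁻ x, b x ^ q ∂μ) :=
      lintegral_add_mul_rpow_le (by fun_prop) ENNReal.ofReal_ne_top hq
    _ ≤ 2 ^ (q - 1) * (2 ^ finrank ℝ E * (μ Ω)⁻¹ ^ p *
            ENNReal.ofReal (τ ^ (-(finrank ℝ E * p))) * (∫⁻ x in Ω, ‖g x‖ₑ ^ s ∂μ) ^ (1 + p) +
          M ^ q * (2 ^ finrank ℝ E * (μ Ω)⁻¹ ^ p * ENNReal.ofReal (τ ^ (-(finrank ℝ E * p))) *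
            (∫⁻ x in Ω, ‖fderiv ℝ g x‖ₑ ^ s ∂μ) ^ (1 + p))) := by
      gcongr
    _ = _ := by ring

lemma setIntegral_norm_rpow_le {s p : ℝ} {m : ℕ} (hΩ : IsOpen Ω) (hΩc : Convex ℝ Ω)
    (hΩb : Bornology.IsBounded Ω) (hΩn : Ω.Nonempty) (hg : ContDiffOn ℝ 1 g Ω)
    (hgs : IntegrableOn (fun x ↦ ‖g x‖ ^ s) Ω μ)
    (hgs' : IntegrableOn (fun x ↦ ‖fderiv ℝ g x‖ ^ s) Ω μ)
    (hs : 1 ≤ s) (hp : 0 ≤ p) (hm : finrank ℝ E * p * (m + 1) ≤ m * (s * (1 + p)))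
    (hτ : 0 < τ) (hτ' : τ ≤ 1 / 2) :
    ∫ x in Ω, ‖g x‖ ^ (s * (1 + p)) ∂μ ≤
      2 ^ (s * (1 + p) - 1) * (2 ^ finrank ℝ E * (μ.real Ω)⁻¹ ^ p * τ ^ (-(finrank ℝ E * p))) *
        ((∫ x in Ω, ‖g x‖ ^ s ∂μ) ^ (1 + p) + ((m + 1) * diam Ω * τ) ^ (s * (1 + p)) *
          (∫ x in Ω, ‖fderiv ℝ g x‖ ^ s ∂μ) ^ (1 + p)) := by
  have hs₀ : 0 ≤ s := zero_le_one.trans hs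
  have hV : μ Ω ≠ 0 := (hΩ.measure_pos μ hΩn).ne'
  have h_ae : AEStronglyMeasurable g (μ.restrict Ω) :=
    hg.continuousOn.aestronglyMeasurable hΩ.measurableSet
  have h_ae' : AEStronglyMeasurable (fderiv ℝ g) (μ.restrict Ω) :=
    (hg.continuousOn_fderiv_of_isOpen hΩ le_rfl).aestronglyMeasurable hΩ.measurableSet
  have hN := hgs.lintegral_lt_top.ne
  have hD := hgs'.lintegral_lt_top.ne
  simp_rw [← ENNReal.ofReal_rpow_of_nonneg (norm_nonneg _) hs₀, ofReal_norm] at hN hD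
  have h := ENNReal.toReal_mono (by finiteness)
    (setLIntegral_enorm_rpow_le (μ := μ) hΩ hΩc hΩb hΩn hg hs hp hm hτ hτ')
  rw [integral_norm_rpow_eq_toReal_lintegral h_ae (by positivity),
    integral_norm_rpow_eq_toReal_lintegral h_ae hs₀,
    integral_norm_rpow_eq_toReal_lintegral h_ae' hs₀]
  have hM : 0 ≤ (m + 1) * diam Ω * τ := by positivity
  rw [ENNReal.toReal_mul, ENNReal.toReal_add (by finiteness) (by finiteness)] at h
  simpa [← ENNReal.toReal_rpow, measureReal_def, hτ.le, Real.rpow_nonneg, hM] using h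

lemma setIntegral_norm_rpow_le_div_add [Nontrivial E] {s t : ℝ} (hΩ : IsOpen Ω)
    (hΩc : Convex ℝ Ω) (hΩb : Bornology.IsBounded Ω) (hΩn : Ω.Nonempty) (hg : ContDiffOn ℝ 1 g Ω)
    (hgs : IntegrableOn (fun x ↦ ‖g x‖ ^ s) Ω μ)
    (hgs' : IntegrableOn (fun x ↦ ‖fderiv ℝ g x‖ ^ s) Ω μ) (hs : 1 ≤ s)
    (ht : t ∈ Ioc 0 ((1 / 2) ^ s)) :
    ∫ x in Ω, ‖g x‖ ^ (s * (1 + s / finrank ℝ E)) ∂μ ≤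
      2 ^ (s * (1 + s / finrank ℝ E) - 1) * (2 ^ finrank ℝ E * (μ.real Ω)⁻¹ ^ (s / finrank ℝ E)) *
        ((∫ x in Ω, ‖g x‖ ^ s ∂μ) ^ (1 + s / finrank ℝ E) / t +
          t ^ (s / finrank ℝ E) * (((finrank ℝ E + 1) * diam Ω) ^ s *
            ∫ x in Ω, ‖fderiv ℝ g x‖ ^ s ∂μ) ^ (1 + s / finrank ℝ E)) := by
  have hs₀ : 0 < s := one_pos.trans_le hs
  have hn : (0 : ℝ) < finrank ℝ E := mod_cast finrank_pos
  have ht₀ : 0 < t := ht.1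
  have hτ : (t ^ s⁻¹) ^ s = t := Real.rpow_inv_rpow ht₀.le hs₀.ne'
  have hτ' : t ^ s⁻¹ ≤ 1 / 2 := (Real.rpow_inv_le_iff_of_pos ht₀.le (by norm_num) hs₀).2 ht.2
  have hD : 0 ≤ ∫ x in Ω, ‖fderiv ℝ g x‖ ^ s ∂μ := integral_nonneg fun x ↦ by positivity
  have hp : 0 < s / finrank ℝ E := by positivity
  have hnp : finrank ℝ E * (s / finrank ℝ E) = s := mul_div_cancel₀ _ hn.ne'
  refine (setIntegral_norm_rpow_le hΩ hΩc hΩb hΩn hg hgs hgs' hs hp.le (m := finrank ℝ E)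
    (by nlinarith) (Real.rpow_pos_of_pos ht₀ s⁻¹) hτ').trans_eq ?_
  generalize s / finrank ℝ E = p at *
  have h_grad : (((finrank ℝ E + 1) * diam Ω * t ^ s⁻¹) ^ s) ^ (1 + p) =
      t * (t ^ p * (((finrank ℝ E + 1) * diam Ω) ^ s) ^ (1 + p)) := by
    rw [Real.mul_rpow (by positivity) (by positivity), hτ,
      Real.mul_rpow (by positivity) ht₀.le, Real.rpow_one_add' ht₀.le (by positivity)]
    ring
  rw [hnp, Real.rpow_neg (by positivity), hτ, Real.rpow_mul (by positivity), h_grad,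
    Real.mul_rpow (by positivity) hD]
  field_simp

lemma setIntegral_norm_rpow_le_mul_add [Nontrivial E] {s : ℝ} (hΩ : IsOpen Ω) (hΩc : Convex ℝ Ω)
    (hΩb : Bornology.IsBounded Ω) (hg : ContDiffOn ℝ 1 g Ω)
    (hgs : IntegrableOn (fun x ↦ ‖fderiv ℝ g x‖ ^ s) Ω μ) (hs : 1 ≤ s)
    (hN : 0 < ∫ x in Ω, ‖g x‖ ^ s ∂μ) :
    ∫ x in Ω, ‖g x‖ ^ (s * (1 + s / finrank ℝ E)) ∂μ ≤
      2 ^ (s * (1 + s / finrank ℝ E)) * 2 ^ finrank ℝ E *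
        ((finrank ℝ E + 1) ^ s * ((μ.real Ω)⁻¹ ^ (s / finrank ℝ E) * diam Ω ^ s) *
            ∫ x in Ω, ‖fderiv ℝ g x‖ ^ s ∂μ +
          2 ^ s * ((μ.real Ω)⁻¹ ^ (s / finrank ℝ E) * ∫ x in Ω, ‖g x‖ ^ s ∂μ)) *
        (∫ x in Ω, ‖g x‖ ^ s ∂μ) ^ (s / finrank ℝ E) := by
  have hΩn : Ω.Nonempty := by
    by_contra! h
    simp [h] at hN
  have : 0 ≤ ∫ x in Ω, ‖fderiv ℝ g x‖ ^ s ∂μ := integral_nonneg fun x ↦ by positivity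
  refine (le_mul_of_forall_le_div_add_mul (by positivity) hN (by positivity) (by positivity)
    (by positivity) fun t ht ↦ setIntegral_norm_rpow_le_div_add hΩ hΩc hΩb hΩn hg
      (.of_integral_ne_zero hN.ne') hgs hs ht).trans_eq ?_
  rw [Real.mul_rpow (by positivity) diam_nonneg, Real.div_rpow one_pos.le two_pos.le,
    Real.one_rpow, Real.rpow_sub_one two_ne_zero]
  field_simp

lemma inv_measureReal_ball_rpow_mul_diam_rpow_le [Nontrivial E] {s r : ℝ} (hs : 0 ≤ s)
    (hr : 0 < r) (c : E) :
    (μ.real (ball c r))⁻¹ ^ (s / finrank ℝ E) * diam (ball c r) ^ s ≤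
      (μ.real (ball 0 1))⁻¹ ^ (s / finrank ℝ E) * 2 ^ s := by
  have hn : (finrank ℝ E : ℝ) ≠ 0 := mod_cast finrank_pos.ne'
  calc (μ.real (ball c r))⁻¹ ^ (s / finrank ℝ E) * diam (ball c r) ^ s
    _ ≤ (r ^ finrank ℝ E * μ.real (ball 0 1))⁻¹ ^ (s / finrank ℝ E) * (2 * r) ^ s := by
      rw [measureReal_def, μ.addHaar_ball_of_pos c hr, ENNReal.toReal_mul,
        ENNReal.toReal_ofReal (by positivity), ← measureReal_def]
      gcongr
      exact diam_ball hr.le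
    _ = (r ^ s)⁻¹ * r ^ s * ((μ.real (ball 0 1))⁻¹ ^ (s / finrank ℝ E) * 2 ^ s) := by
      rw [mul_inv, Real.mul_rpow (by positivity) (by positivity), Real.mul_rpow two_pos.le hr.le,
        Real.inv_rpow (by positivity), ← Real.rpow_natCast_mul hr.le, mul_div_cancel₀ _ hn]
      ring
    _ = _ := by rw [inv_mul_cancel₀ (by positivity), one_mul]

end Convex

section Gradient

lemma sq_opNorm_le_sum_sq_norm_apply_orthonormalBasis {ι E F : Type*} [Fintype ι]
    [NormedAddCommGroup E] [InnerProductSpace ℝ E] [NormedAddCommGroup F] [NormedSpace ℝ F]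
    (b : OrthonormalBasis ι ℝ E) (L : E →L[ℝ] F) : ‖L‖ ^ 2 ≤ ∑ i, ‖L (b i)‖ ^ 2 := by
  rw [← Real.le_sqrt (norm_nonneg L) (by positivity)]
  refine L.opNorm_le_bound (Real.sqrt_nonneg _) fun v ↦ ?_
  calc ‖L v‖ = ‖∑ i, b.repr v i • L (b i)‖ := by
        simp_rw [← map_smul, ← map_sum, b.sum_repr]
    _ ≤ ∑ i, ‖L (b i)‖ * ‖b.repr v i‖ :=
      norm_sum_le_of_le _ fun i _ ↦ by rw [norm_smul, mul_comm]
    _ ≤ √(∑ i, ‖L (b i)‖ ^ 2) * √(∑ i, ‖b.repr v i‖ ^ 2) := Real.sum_mul_le_sqrt_mul_sqrt _ _ _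
    _ = √(∑ i, ‖L (b i)‖ ^ 2) * ‖v‖ := by rw [← EuclideanSpace.norm_eq, b.repr.norm_map]

lemma integrableOn_ball_of_continuous {X G : Type*} [MetricSpace X] [ProperSpace X]
    [MeasurableSpace X] [OpensMeasurableSpace X] [NormedAddCommGroup G] {μ : Measure X}
    [IsFiniteMeasureOnCompacts μ] {f : X → G} (hf : Continuous f) (c : X) (r : ℝ) :
    IntegrableOn f (ball c r) μ :=
  (hf.continuousOn.integrableOn_compact (isCompact_closedBall c r)).mono_set ball_subset_closedBall

variable {d : ℕ} {g : EuclideanSpace ℝ (Fin d) → ℂ}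

lemma sq_norm_fderiv_le_gradSq (x : EuclideanSpace ℝ (Fin d)) :
    ‖fderiv ℝ g x‖ ^ 2 ≤ gradSq g x := by
  simpa [gradSq] using sq_opNorm_le_sum_sq_norm_apply_orthonormalBasis
    (EuclideanSpace.basisFun (Fin d) ℝ) (fderiv ℝ g x)

lemma setIntegral_ball_sq_norm_fderiv_le (hg : ContDiff ℝ 1 g) (c : EuclideanSpace ℝ (Fin d))
    (r : ℝ) : ∫ x in ball c r, ‖fderiv ℝ g x‖ ^ 2 ≤ ∫ x in ball c r, gradSq g x := by
  have : Continuous (fderiv ℝ g) := hg.continuous_fderiv one_ne_zero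
  have h_gradSq : Continuous (gradSq g) := by
    unfold gradSq
    fun_prop
  exact setIntegral_mono (integrableOn_ball_of_continuous (by fun_prop) c r)
    (integrableOn_ball_of_continuous h_gradSq c r) sq_norm_fderiv_le_gradSq

end Gradient

theorem local_uncertainty_general {E F : Type*} [NormedAddCommGroup E] [NormedSpace ℝ E]
    [MeasurableSpace E] [BorelSpace E] [FiniteDimensional ℝ E] [Nontrivial E]
    [NormedAddCommGroup F] [NormedSpace ℝ F] (μ : Measure E) [μ.IsAddHaarMeasure] {s : ℝ}
    (hs : 1 ≤ s) :
    ∃ C : ℝ, 0 < C ∧ ∀ (c : E) (r : ℝ), 0 < r → ∀ g : E → F, ContDiffOn ℝ 1 g (ball c r) →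
      IntegrableOn (fun x ↦ ‖fderiv ℝ g x‖ ^ s) (ball c r) μ →
      0 < (∫ x in ball c r, ‖g x‖ ^ s ∂μ) →
      ∫ x in ball c r, ‖fderiv ℝ g x‖ ^ s ∂μ
        ≥ (1 / C) * (∫ x in ball c r, ‖g x‖ ^ (s * (1 + s / finrank ℝ E)) ∂μ) /
            (∫ x in ball c r, ‖g x‖ ^ s ∂μ) ^ (s / finrank ℝ E)
          - C * (μ (ball c r)).toReal ^ (-(s / finrank ℝ E)) *
            ∫ x in ball c r, ‖g x‖ ^ s ∂μ := by
  set p := s / finrank ℝ E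
  set K : ℝ := 2 ^ (s * (1 + p)) * 2 ^ finrank ℝ E
  set A : ℝ := K * ((finrank ℝ E + 1) ^ s * ((μ.real (ball 0 1))⁻¹ ^ p * 2 ^ s))
  set B : ℝ := K * 2 ^ s
  refine ⟨1 + A + B, by positivity, fun c r hr g hg hgs hN ↦ ?_⟩
  rw [mul_div_assoc, mul_assoc, Real.rpow_neg ENNReal.toReal_nonneg, ← measureReal_def,
    ← Real.inv_rpow measureReal_nonneg]
  set N := ∫ x in ball c r, ‖g x‖ ^ s ∂μ
  set D := ∫ x in ball c r, ‖fderiv ℝ g x‖ ^ s ∂μ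
  have hD : 0 ≤ D := integral_nonneg fun x ↦ by positivity
  refine one_div_mul_sub_mul_le (by positivity) (by positivity) hD (by positivity) ?_
  rw [div_le_iff₀ (by positivity)]
  calc ∫ x in ball c r, ‖g x‖ ^ (s * (1 + p)) ∂μ
    _ ≤ K * ((finrank ℝ E + 1) ^ s * ((μ.real (ball c r))⁻¹ ^ p * diam (ball c r) ^ s) * D +
          2 ^ s * ((μ.real (ball c r))⁻¹ ^ p * N)) * N ^ p :=
      setIntegral_norm_rpow_le_mul_add isOpen_ball (convex_ball c r) isBounded_ball hg hgs hs hN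
    _ ≤ K * ((finrank ℝ E + 1) ^ s * ((μ.real (ball 0 1))⁻¹ ^ p * 2 ^ s) * D +
          2 ^ s * ((μ.real (ball c r))⁻¹ ^ p * N)) * N ^ p := by
      have h_diam := inv_measureReal_ball_rpow_mul_diam_rpow_le (μ := μ) (zero_le_one.trans hs) hr c
      gcongr
    _ = (A * D + B * ((μ.real (ball c r))⁻¹ ^ p * N)) * N ^ p := by ring

/-- **Local uncertainty principle**: for every open ball `B ⊂ ℝ^d` and `C¹` function `g`
with `∫_B |g|² > 0`,
`∫_B |∇g|² ≥ (1/C_d) (∫_B |g|^{2(1+2/d)}) / (∫_B |g|²)^{2/d} − C_d |B|^{−2/d} ∫_B |g|²`. -/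
theorem local_uncertainty (d : ℕ) (hd : 1 ≤ d) :
    ∃ C : ℝ, 0 < C ∧
      ∀ (c : EuclideanSpace ℝ (Fin d)) (r : ℝ), 0 < r →
      ∀ g : EuclideanSpace ℝ (Fin d) → ℂ, ContDiff ℝ 1 g →
        0 < (∫ x in Metric.ball c r, ‖g x‖ ^ 2) →
        ∫ x in Metric.ball c r, gradSq g x
          ≥ (1 / C) * (∫ x in Metric.ball c r, ‖g x‖ ^ (2 * (1 + 2 / (d : ℝ)))) /
              (∫ x in Metric.ball c r, ‖g x‖ ^ 2) ^ (2 / (d : ℝ))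
            - C * (volume (Metric.ball c r)).toReal ^ (-(2 / (d : ℝ))) *
              ∫ x in Metric.ball c r, ‖g x‖ ^ 2 := by
  have := Fin.pos_iff_nonempty.1 hd
  obtain ⟨C, hC, h⟩ := local_uncertainty_general (E := EuclideanSpace ℝ (Fin d)) (F := ℂ) volume
    one_le_two
  simp only [Real.rpow_two, finrank_euclideanSpace_fin] at h
  exact ⟨C, hC, fun c r hr g hg hN ↦ (h c r hr g hg.contDiffOn (integrableOn_ball_of_continuous
    ((hg.continuous_fderiv one_ne_zero).norm.pow 2) c r) hN).trans
    (setIntegral_ball_sq_norm_fderiv_le hg c r)⟩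
end

section
/- (Gagliardo–Nirenberg inequality from Sobolev's inequality by scaling) Fix an integer d ≥ 1 and set q = 2(1+2/d). Suppose there is a constant C > 0 such that for every continuously differentiable, compactly supported function G : ℝ^d → ℂ one has (∫_{ℝ^d} |G|^q)^{1/q} ≤ C (∫_{ℝ^d} |G|² + ∫_{ℝ^d} |∇G|²)^{1/2}. Then there is a constant C' > 0 such that for every continuously differentiable, compactly supported G : ℝ^d → ℂ one has (∫_{ℝ^d} |G|^q)^{1/q} ≤ C' (∫_{ℝ^d} |∇G|²)^{d/(2(d+2))} (∫_{ℝ^d} |G|²)^{1/(d+2)}. -/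
open MeasureTheory
open scoped BigOperators

/-!
Apply the Sobolev inequality to the dilates `x ↦ G (l • x)`. With `θ = d (1/2 - 1/p)`, changing
variables gives `‖G‖_p ≤ C l^(-θ) (‖G‖₂² + l² ‖∇G‖₂²)^(1/2)` for every `l > 0`. The choice
`l = ‖G‖₂ / ‖∇G‖₂` balances the two terms and leaves `√2 C ‖∇G‖₂^θ ‖G‖₂^(1-θ)`.
-/

lemma exists_balancing_scale (θ : ℝ) {M K : ℝ} (hM : 0 < M) (hK : 0 < K) :
    ∃ l : ℝ, 0 < l ∧ l ^ (-θ) * (M + l ^ 2 * K) ^ ((1 : ℝ) / 2) =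
      √2 * K ^ (θ / 2) * M ^ ((1 - θ) / 2) := by
  refine ⟨√(M / K), by positivity, ?_⟩
  have balance : √(M / K) ^ 2 * K = M := by
    rw [Real.sq_sqrt (by positivity), div_mul_cancel₀ M hK.ne']
  have scale_rpow : √(M / K) ^ (-θ) = K ^ (θ / 2) * M ^ (-(θ / 2)) := by
    rw [Real.sqrt_eq_rpow, ← Real.rpow_mul (by positivity), Real.div_rpow hM.le hK.le,
      show 1 / 2 * -θ = -(θ / 2) by ring, Real.rpow_neg hK.le, div_inv_eq_mul, mul_comm]
  calc √(M / K) ^ (-θ) * (M + √(M / K) ^ 2 * K) ^ ((1 : ℝ) / 2)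
      = K ^ (θ / 2) * M ^ (-(θ / 2)) * (√2 * M ^ ((1 : ℝ) / 2)) := by
        rw [balance, scale_rpow, ← two_mul, Real.mul_rpow zero_le_two hM.le,
          ← Real.sqrt_eq_rpow 2]
    _ = √2 * K ^ (θ / 2) * (M ^ (-(θ / 2)) * M ^ ((1 : ℝ) / 2)) := by ring
    _ = √2 * K ^ (θ / 2) * M ^ ((1 - θ) / 2) := by
        rw [← Real.rpow_add hM]
        ring_nf

lemma le_rpow_mul_rpow_of_forall_scale {θ a C M K : ℝ} (hθ₀ : 0 ≤ θ) (hθ₁ : θ ≤ 1) (hC : 0 ≤ C)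
    (hM : 0 ≤ M) (hK : 0 ≤ K)
    (h : ∀ l : ℝ, 0 < l → a ≤ C * (l ^ (-θ) * (M + l ^ 2 * K) ^ ((1 : ℝ) / 2))) :
    a ≤ √2 * C * K ^ (θ / 2) * M ^ ((1 - θ) / 2) := by
  -- The balancing scale is degenerate when `M` or `K` vanishes, so perturb both and let `ε → 0`.
  have perturbed : ∀ ε : ℝ, 0 < ε →
      a ≤ √2 * C * (K + ε) ^ (θ / 2) * (M + ε) ^ ((1 - θ) / 2) := by
    intro ε hε
    obtain ⟨l, hl, hbalance⟩ :=
      exists_balancing_scale θ (add_pos_of_nonneg_of_pos hM hε) (add_pos_of_nonneg_of_pos hK hε)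
    calc a ≤ C * (l ^ (-θ) * (M + l ^ 2 * K) ^ ((1 : ℝ) / 2)) := h l hl
      _ ≤ C * (l ^ (-θ) * ((M + ε) + l ^ 2 * (K + ε)) ^ ((1 : ℝ) / 2)) := by
          gcongr <;> linarith
      _ = √2 * C * (K + ε) ^ (θ / 2) * (M + ε) ^ ((1 - θ) / 2) := by
          rw [hbalance]
          ring
  have continuous_bound :
      Continuous fun ε : ℝ => √2 * C * (K + ε) ^ (θ / 2) * (M + ε) ^ ((1 - θ) / 2) := by
    have := Real.continuous_rpow_const (q := θ / 2) (by linarith)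
    have := Real.continuous_rpow_const (q := (1 - θ) / 2) (by linarith)
    fun_prop
  have limit := (continuous_bound.tendsto 0).mono_left
    (nhdsWithin_le_nhds (s := Set.Ioi (0 : ℝ)))
  simp only [add_zero] at limit
  exact ge_of_tendsto limit (Filter.eventually_of_mem self_mem_nhdsWithin perturbed)

section Dilation

variable {E F H : Type*} [NormedAddCommGroup E] [NormedSpace ℝ E]
  [NormedAddCommGroup F] [NormedSpace ℝ F] [NormedAddCommGroup H] [NormedSpace ℝ H]
  [FiniteDimensional ℝ E] [MeasurableSpace E] [BorelSpace E]
  (μ : Measure E) [μ.IsAddHaarMeasure]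

lemma integral_comp_smul_eq_rpow_smul (f : E → F) {l : ℝ} (hl : 0 < l) :
    ∫ x, f (l • x) ∂μ = l ^ (-(Module.finrank ℝ E : ℝ)) • ∫ x, f x ∂μ := by
  rw [Measure.integral_comp_smul_of_nonneg μ f l (hR := hl.le), Real.rpow_neg hl.le,
    Real.rpow_natCast]

lemma integral_norm_sq_fderiv_comp_smul (T : (E →L[ℝ] F) →L[ℝ] H) (G : E → F) {l : ℝ}
    (hl : 0 < l) :
    ∫ x, ‖T (fderiv ℝ (fun y => G (l • y)) x)‖ ^ 2 ∂μ =
      l ^ (-(Module.finrank ℝ E : ℝ)) * (l ^ 2 * ∫ x, ‖T (fderiv ℝ G x)‖ ^ 2 ∂μ) := by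
  simp only [fderiv_comp_smul, map_smul, norm_smul, mul_pow, Real.norm_eq_abs, sq_abs]
  rw [integral_const_mul, integral_comp_smul_eq_rpow_smul μ (fun x => ‖T (fderiv ℝ G x)‖ ^ 2) hl,
    smul_eq_mul]
  ring

lemma scaled_sobolev_of_sobolev_dilate (T : (E →L[ℝ] F) →L[ℝ] H) {p C l : ℝ} (hl : 0 < l)
    {G : E → F}
    (h : (∫ x, ‖G (l • x)‖ ^ p ∂μ) ^ (1 / p) ≤
      C * ((∫ x, ‖G (l • x)‖ ^ 2 ∂μ) +
        ∫ x, ‖T (fderiv ℝ (fun y => G (l • y)) x)‖ ^ 2 ∂μ) ^ ((1 : ℝ) / 2)) :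
    (∫ x, ‖G x‖ ^ p ∂μ) ^ (1 / p) ≤
      C * (l ^ (-(Module.finrank ℝ E * (1 / 2 - 1 / p))) *
        ((∫ x, ‖G x‖ ^ 2 ∂μ) + l ^ 2 * ∫ x, ‖T (fderiv ℝ G x)‖ ^ 2 ∂μ) ^ ((1 : ℝ) / 2)) := by
  set d : ℝ := (Module.finrank ℝ E : ℝ)
  set A := ∫ x, ‖G x‖ ^ p ∂μ
  set S := (∫ x, ‖G x‖ ^ 2 ∂μ) + l ^ 2 * ∫ x, ‖T (fderiv ℝ G x)‖ ^ 2 ∂μ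
  have hA : 0 ≤ A := integral_nonneg fun x => by positivity
  have hS : 0 ≤ S := by positivity
  have scaled : (l ^ (-d) * A) ^ (1 / p) ≤ C * (l ^ (-d) * S) ^ ((1 : ℝ) / 2) := by
    rwa [integral_norm_sq_fderiv_comp_smul μ T G hl,
      integral_comp_smul_eq_rpow_smul μ (fun x => ‖G x‖ ^ p) hl,
      integral_comp_smul_eq_rpow_smul μ (fun x => ‖G x‖ ^ 2) hl, smul_eq_mul, smul_eq_mul,
      ← mul_add] at h
  rw [Real.mul_rpow (by positivity) hA, Real.mul_rpow (by positivity) hS,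
    ← Real.rpow_mul hl.le, ← Real.rpow_mul hl.le] at scaled
  calc A ^ (1 / p) = l ^ (d * (1 / p)) * (l ^ (-d * (1 / p)) * A ^ (1 / p)) := by
        rw [← mul_assoc, ← Real.rpow_add hl, neg_mul, add_neg_cancel, Real.rpow_zero, one_mul]
    _ ≤ l ^ (d * (1 / p)) * (C * (l ^ (-d * (1 / 2)) * S ^ ((1 : ℝ) / 2))) := by gcongr
    _ = C * (l ^ (d * (1 / p)) * l ^ (-d * (1 / 2)) * S ^ ((1 : ℝ) / 2)) := by ring
    _ = C * (l ^ (-(d * (1 / 2 - 1 / p))) * S ^ ((1 : ℝ) / 2)) := by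
        rw [← Real.rpow_add hl]
        ring_nf

/-- The gradient enters through `T ∘ fderiv ℝ G` with `T` linear, so that `T` fixes the norm on
derivatives: the operator norm for `T = id`, the Hilbert–Schmidt norm for `partialDerivCLM d`. -/
theorem gagliardo_nirenberg_of_sobolev_general (T : (E →L[ℝ] F) →L[ℝ] H) {p θ C : ℝ}
    (hp : 2 ≤ p) (hθ : Module.finrank ℝ E * (1 / 2 - 1 / p) = θ) (hθ₁ : θ ≤ 1) (hC : 0 ≤ C)
    (hSob : ∀ G : E → F, ContDiff ℝ 1 G → HasCompactSupport G →
      (∫ x, ‖G x‖ ^ p ∂μ) ^ (1 / p) ≤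
        C * ((∫ x, ‖G x‖ ^ 2 ∂μ) + ∫ x, ‖T (fderiv ℝ G x)‖ ^ 2 ∂μ) ^ ((1 : ℝ) / 2))
    {G : E → F} (hG : ContDiff ℝ 1 G) (hGc : HasCompactSupport G) :
    (∫ x, ‖G x‖ ^ p ∂μ) ^ (1 / p) ≤
      √2 * C * (∫ x, ‖T (fderiv ℝ G x)‖ ^ 2 ∂μ) ^ (θ / 2) *
        (∫ x, ‖G x‖ ^ 2 ∂μ) ^ ((1 - θ) / 2) := by
  subst hθ
  have hθ₀ : 0 ≤ Module.finrank ℝ E * (1 / 2 - 1 / p) :=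
    mul_nonneg (Nat.cast_nonneg _) (sub_nonneg.2 (one_div_le_one_div_of_le two_pos hp))
  refine le_rpow_mul_rpow_of_forall_scale hθ₀ hθ₁ hC (by positivity) (by positivity) fun l hl => ?_
  exact scaled_sobolev_of_sobolev_dilate μ T hl (hSob _ (hG.comp (contDiff_const_smul l))
    (hGc.comp_smul hl.ne'))

end Dilation

/-- The linear map sending a derivative `L` to the vector `(L e₁, …, L e_d)` of its partial
derivatives, whose Euclidean norm is the norm used in `gradSq`. -/
noncomputable def partialDerivCLM (d : ℕ) :
    (EuclideanSpace ℝ (Fin d) →L[ℝ] ℂ) →L[ℝ] EuclideanSpace ℂ (Fin d) :=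
  (PiLp.continuousLinearEquiv 2 ℝ fun _ : Fin d => ℂ).symm.toContinuousLinearMap ∘L
    ContinuousLinearMap.pi fun i => ContinuousLinearMap.apply ℝ ℂ (EuclideanSpace.single i 1)

lemma norm_partialDerivCLM_fderiv_sq {d : ℕ} (f : EuclideanSpace ℝ (Fin d) → ℂ)
    (x : EuclideanSpace ℝ (Fin d)) : ‖partialDerivCLM d (fderiv ℝ f x)‖ ^ 2 = gradSq f x :=
  EuclideanSpace.norm_sq_eq _

/-- **Gagliardo–Nirenberg from Sobolev by scaling**: if the Sobolev inequality
`‖G‖_{L^q} ≤ C ‖G‖_{H¹}` holds (with `q = 2(1+2/d)`) for all `C¹` compactly supported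
`G`, then the Gagliardo–Nirenberg inequality
`‖G‖_{L^q} ≤ C' ‖∇G‖_{L²}^{d/(d+2)} ‖G‖_{L²}^{2/(d+2)}` holds for all such `G`. -/
theorem gagliardo_nirenberg_of_sobolev (d : ℕ) (hd : 1 ≤ d) (C : ℝ) (hC : 0 < C)
    (hSob : ∀ G : EuclideanSpace ℝ (Fin d) → ℂ,
      ContDiff ℝ 1 G → HasCompactSupport G →
      (∫ x, ‖G x‖ ^ (2 * (1 + 2 / (d : ℝ)))) ^ (1 / (2 * (1 + 2 / (d : ℝ))))
        ≤ C * ((∫ x, ‖G x‖ ^ 2) + ∫ x, gradSq G x) ^ ((1 : ℝ) / 2)) :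
    ∃ C' : ℝ, 0 < C' ∧
      ∀ G : EuclideanSpace ℝ (Fin d) → ℂ,
        ContDiff ℝ 1 G → HasCompactSupport G →
        (∫ x, ‖G x‖ ^ (2 * (1 + 2 / (d : ℝ)))) ^ (1 / (2 * (1 + 2 / (d : ℝ))))
          ≤ C' * (∫ x, gradSq G x) ^ ((d : ℝ) / (2 * ((d : ℝ) + 2))) *
              (∫ x, ‖G x‖ ^ 2) ^ (1 / ((d : ℝ) + 2)) := by
  have hd₀ : (0 : ℝ) < d := by exact_mod_cast hd
  have hp : 2 ≤ 2 * (1 + 2 / (d : ℝ)) := by linarith [div_pos two_pos hd₀]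
  have hθ : Module.finrank ℝ (EuclideanSpace ℝ (Fin d)) * (1 / 2 - 1 / (2 * (1 + 2 / (d : ℝ)))) =
      d / (d + 2) := by
    rw [finrank_euclideanSpace_fin]
    field_simp
    ring
  have hθ₁ : (d / (d + 2) : ℝ) ≤ 1 := div_le_one_of_le₀ (by linarith) (by positivity)
  have hgrad : (d / (d + 2) / 2 : ℝ) = d / (2 * (d + 2)) := by field_simp
  have hmass : (1 - d / (d + 2) : ℝ) / 2 = 1 / (d + 2) := by field_simp; ring
  refine ⟨√2 * C, by positivity, fun G hG hGc => ?_⟩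
  simpa only [norm_partialDerivCLM_fderiv_sq, hgrad, hmass] using
    gagliardo_nirenberg_of_sobolev_general volume (partialDerivCLM d) hp hθ hθ₁ hC.le
      (by simpa only [norm_partialDerivCLM_fderiv_sq] using hSob) hG hGc
end

section
/- (Sobolev-type uncertainty principle) For every integer d ≥ 1 there exists a constant K > 0 depending only on d such that for every continuously differentiable, compactly supported function u : ℝ^d → ℂ, one has (∫_{ℝ^d} |∇u(x)|² dx) · (∫_{ℝ^d} |u(x)|² dx)^{2/d} ≥ K ∫_{ℝ^d} |u(x)|^{2(1+2/d)} dx. -/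
open MeasureTheory
open scoped BigOperators

/-!
On a space of dimension `n`, the inequality is a Gagliardo–Nirenberg–Sobolev inequality combined
with Hölder's inequality, and which of the two comes first depends on `n`. If `n ≥ 3`, Hölder's
inequality interpolates the exponent `2 + 4 / n` between `2` and the critical exponent
`2 * n / (n - 2)`, and the critical norm of `u` is bounded by the `L²` norm of its derivative.
If `n ≤ 2` there is no critical exponent: there the `L¹` inequality (for `n = 1`, the bound of the
supremum by the integral of the derivative) is applied to `‖u‖ ^ 2`, whose derivative is at most
`2 * ‖u‖ * ‖∇u‖`, and the Cauchy–Schwarz inequality separates the factors.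
-/

open Module
open scoped ENNReal NNReal

section Lintegral

variable {α : Type*} [MeasurableSpace α] {μ : Measure α}

theorem sq_lintegral_mul_le {f g : α → ℝ≥0∞} (hf : AEMeasurable f μ) (hg : AEMeasurable g μ) :
    (∫⁻ x, f x * g x ∂μ) ^ 2 ≤ (∫⁻ x, f x ^ 2 ∂μ) * ∫⁻ x, g x ^ 2 ∂μ := by
  have holder := ENNReal.lintegral_mul_le_Lp_mul_Lq μ .two_two hf hg
  simp only [Pi.mul_apply, ENNReal.rpow_two] at holder
  calc (∫⁻ x, f x * g x ∂μ) ^ 2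
    _ ≤ ((∫⁻ x, f x ^ 2 ∂μ) ^ (1 / 2 : ℝ) * (∫⁻ x, g x ^ 2 ∂μ) ^ (1 / 2 : ℝ)) ^ 2 := by gcongr
    _ = (∫⁻ x, f x ^ 2 ∂μ) * ∫⁻ x, g x ^ 2 ∂μ := by
      simp [mul_pow, ← ENNReal.rpow_mul_natCast]

theorem lintegral_rpow_le_lintegral_rpow_mul_lintegral_rpow {f : α → ℝ≥0∞} (hf : AEMeasurable f μ)
    {p q r s t : ℝ} (hp : 0 ≤ p) (hq : 0 ≤ q) (hs : 0 ≤ s) (ht : 0 ≤ t) (hst : s + t = 1)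
    (hr : r = p * s + q * t) :
    ∫⁻ x, f x ^ r ∂μ ≤ (∫⁻ x, f x ^ p ∂μ) ^ s * (∫⁻ x, f x ^ q ∂μ) ^ t := by
  have split (x : α) : f x ^ r = (f x ^ p) ^ s * (f x ^ q) ^ t := by
    rw [hr, ENNReal.rpow_add_of_nonneg _ _ (by positivity) (by positivity), ENNReal.rpow_mul,
      ENNReal.rpow_mul]
  simp_rw [split]
  exact ENNReal.lintegral_mul_norm_pow_le (hf.pow_const p) (hf.pow_const q) hs ht hst

end Lintegral

section CompactSupport

variable {X F : Type*} [TopologicalSpace X] [MeasurableSpace X] [OpensMeasurableSpace X]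
  {μ : Measure X} [IsFiniteMeasureOnCompacts μ] [NormedAddCommGroup F] {f : X → F} {p : ℝ}

theorem integrable_norm_rpow_of_hasCompactSupport (hf : Continuous f) (h2f : HasCompactSupport f)
    (hp : 0 < p) : Integrable (fun x ↦ ‖f x‖ ^ p) μ :=
  (hf.norm.rpow_const fun _ ↦ .inr hp.le).integrable_of_hasCompactSupport
    (h2f.norm.rpow_const hp.ne')

theorem ofReal_integral_norm_rpow (hf : Continuous f) (h2f : HasCompactSupport f) (hp : 0 < p) :
    ENNReal.ofReal (∫ x, ‖f x‖ ^ p ∂μ) = ∫⁻ x, ‖f x‖ₑ ^ p ∂μ := by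
  rw [ofReal_integral_eq_lintegral_ofReal (integrable_norm_rpow_of_hasCompactSupport hf h2f hp)
    (.of_forall fun _ ↦ by positivity)]
  simp_rw [← ENNReal.ofReal_rpow_of_nonneg (norm_nonneg _) hp.le, ofReal_norm]

theorem ofReal_integral_norm_sq (hf : Continuous f) (h2f : HasCompactSupport f) :
    ENNReal.ofReal (∫ x, ‖f x‖ ^ 2 ∂μ) = ∫⁻ x, ‖f x‖ₑ ^ 2 ∂μ := by
  simpa using ofReal_integral_norm_rpow (μ := μ) hf h2f two_pos

end CompactSupport

theorem enorm_fderiv_norm_sq_le {E F : Type*} [NormedAddCommGroup E] [NormedSpace ℝ E]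
    [NormedAddCommGroup F] [InnerProductSpace ℝ F] {u : E → F} (hu : Differentiable ℝ u) (x : E) :
    ‖fderiv ℝ (fun y ↦ ‖u y‖ ^ 2) x‖ₑ ≤ 2 * ‖u x‖ₑ * ‖fderiv ℝ u x‖ₑ := by
  have sub_one : (2 - 1 : ℝ) = 1 := by norm_num
  simpa only [NNReal.coe_ofNat, Real.rpow_two, sub_one, ENNReal.rpow_one, ENNReal.coe_ofNat] using
    enorm_fderiv_norm_rpow_le (x := x) hu one_lt_two

section Sobolev

variable {E F : Type*} [NormedAddCommGroup E] [NormedSpace ℝ E] [MeasurableSpace E] [BorelSpace E]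
  [NormedAddCommGroup F]

theorem exists_enorm_le_lintegral_fderiv_of_finrank_eq_one [NormedSpace ℝ F] (μ : Measure E)
    [μ.IsAddHaarMeasure] (hE : finrank ℝ E = 1) :
    ∃ C : ℝ≥0, ∀ u : E → F, ContDiff ℝ 1 u → HasCompactSupport u →
      ∀ x, ‖u x‖ₑ ≤ C * ∫⁻ y, ‖fderiv ℝ u y‖ₑ ∂μ := by
  have : FiniteDimensional ℝ E := .of_finrank_pos (by lia)
  let e : ℝ ≃L[ℝ] E := .ofFinrankEq (by rw [hE, finrank_self])
  let c := Measure.addHaarScalarFactor ((volume : Measure ℝ).map e) μ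
  have map_volume : (volume : Measure ℝ).map e = c • μ := Measure.isAddLeftInvariant_eq_smul _ _
  refine ⟨‖e 1‖₊ * c, fun u hu h2u x ↦ ?_⟩
  obtain ⟨t, rfl⟩ := e.surjective x
  have deriv_comp (s : ℝ) : deriv (u ∘ e) s = fderiv ℝ u (e s) (e 1) := by
    rw [fderiv_comp_deriv _ (hu.differentiable one_ne_zero _) e.differentiableAt,
      e.hasFDerivAt.hasDerivAt.deriv]
    rfl
  calc ‖u (e t)‖ₑ
    _ ≤ ∫⁻ s in Set.Iic t, ‖deriv (u ∘ e) s‖ₑ :=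
      HasCompactSupport.enorm_le_lintegral_Ici_deriv (hu.comp e.contDiff)
        (h2u.comp_homeomorph e.toHomeomorph) t
    _ ≤ ∫⁻ s, ‖deriv (u ∘ e) s‖ₑ := setLIntegral_le_lintegral _ _
    _ ≤ ∫⁻ s, ‖e 1‖ₑ * ‖fderiv ℝ u (e s)‖ₑ := by
      gcongr with s
      rw [deriv_comp, mul_comm]
      exact ContinuousLinearMap.le_opENorm _ _
    _ = ‖e 1‖ₑ * ∫⁻ y, ‖fderiv ℝ u y‖ₑ ∂(volume.map e) := by
      rw [lintegral_const_mul' _ _ enorm_ne_top]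
      exact congrArg (‖e 1‖ₑ * ·)
        (e.toHomeomorph.measurableEmbedding.lintegral_map (‖fderiv ℝ u ·‖ₑ)).symm
    _ = (‖e 1‖₊ * c : ℝ≥0) * ∫⁻ y, ‖fderiv ℝ u y‖ₑ ∂μ := by
      rw [map_volume, lintegral_smul_measure, ENNReal.coe_mul, mul_assoc]
      rfl

variable [InnerProductSpace ℝ F]

theorem sq_lintegral_enorm_fderiv_norm_sq_le (μ : Measure E) {u : E → F} (hu : ContDiff ℝ 1 u) :
    (∫⁻ x, ‖fderiv ℝ (fun y ↦ ‖u y‖ ^ 2) x‖ₑ ∂μ) ^ 2 ≤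
      4 * (∫⁻ x, ‖fderiv ℝ u x‖ₑ ^ 2 ∂μ) * ∫⁻ x, ‖u x‖ₑ ^ 2 ∂μ := by
  calc (∫⁻ x, ‖fderiv ℝ (fun y ↦ ‖u y‖ ^ 2) x‖ₑ ∂μ) ^ 2
    _ ≤ (∫⁻ x, 2 * (‖fderiv ℝ u x‖ₑ * ‖u x‖ₑ) ∂μ) ^ 2 := by
      gcongr with x
      rw [mul_comm ‖_‖ₑ, ← mul_assoc]
      exact enorm_fderiv_norm_sq_le (hu.differentiable one_ne_zero) x
    _ = 4 * (∫⁻ x, ‖fderiv ℝ u x‖ₑ * ‖u x‖ₑ ∂μ) ^ 2 := by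
      rw [lintegral_const_mul' _ _ ENNReal.ofNat_ne_top, mul_pow]
      norm_num
    _ ≤ 4 * ((∫⁻ x, ‖fderiv ℝ u x‖ₑ ^ 2 ∂μ) * ∫⁻ x, ‖u x‖ₑ ^ 2 ∂μ) := by
      gcongr
      exact sq_lintegral_mul_le (hu.continuous_fderiv one_ne_zero).enorm.aemeasurable
        hu.continuous.enorm.aemeasurable
    _ = 4 * (∫⁻ x, ‖fderiv ℝ u x‖ₑ ^ 2 ∂μ) * ∫⁻ x, ‖u x‖ₑ ^ 2 ∂μ := (mul_assoc ..).symm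

variable (F) (μ : Measure E) [μ.IsAddHaarMeasure]

theorem exists_lintegral_enorm_pow_six_le_of_finrank_eq_one (hE : finrank ℝ E = 1) :
    ∃ C : ℝ≥0, ∀ u : E → F, ContDiff ℝ 1 u → HasCompactSupport u →
      ∫⁻ x, ‖u x‖ₑ ^ 6 ∂μ ≤
        C * (∫⁻ x, ‖fderiv ℝ u x‖ₑ ^ 2 ∂μ) * (∫⁻ x, ‖u x‖ₑ ^ 2 ∂μ) ^ 2 := by
  obtain ⟨C, hC⟩ := exists_enorm_le_lintegral_fderiv_of_finrank_eq_one (F := ℝ) μ hE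
  refine ⟨C ^ 2 * 4, fun u hu h2u ↦ ?_⟩
  set G := ∫⁻ x, ‖fderiv ℝ u x‖ₑ ^ 2 ∂μ
  set M := ∫⁻ x, ‖u x‖ₑ ^ 2 ∂μ
  have sup_bound (x : E) : ‖u x‖ₑ ^ 4 ≤ C ^ 2 * (4 * G * M) :=
    calc ‖u x‖ₑ ^ 4
      _ = ‖‖u x‖ ^ 2‖ₑ ^ 2 := by rw [enorm_pow, enorm_norm, ← pow_mul]
      _ ≤ (C * ∫⁻ y, ‖fderiv ℝ (fun z ↦ ‖u z‖ ^ 2) y‖ₑ ∂μ) ^ 2 := by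
        gcongr
        exact hC _ (hu.norm_sq ℝ) (h2u.comp_left (g := (‖·‖ ^ 2)) (by simp)) x
      _ ≤ C ^ 2 * (4 * G * M) := by
        rw [mul_pow]
        gcongr
        exact sq_lintegral_enorm_fderiv_norm_sq_le μ hu
  calc ∫⁻ x, ‖u x‖ₑ ^ 6 ∂μ
    _ ≤ ∫⁻ x, C ^ 2 * (4 * G * M) * ‖u x‖ₑ ^ 2 ∂μ := by
      gcongr with x
      rw [show 6 = 4 + 2 from rfl, pow_add]
      gcongr
      exact sup_bound x
    _ = C ^ 2 * (4 * G * M) * M :=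
      lintegral_const_mul _ (hu.continuous.enorm.measurable.pow_const 2)
    _ = (C ^ 2 * 4 : ℝ≥0) * G * M ^ 2 := by
      push_cast
      ring

theorem exists_lintegral_enorm_pow_four_le_of_finrank_eq_two (hE : finrank ℝ E = 2) :
    ∃ C : ℝ≥0, ∀ u : E → F, ContDiff ℝ 1 u → HasCompactSupport u →
      ∫⁻ x, ‖u x‖ₑ ^ 4 ∂μ ≤
        C * (∫⁻ x, ‖fderiv ℝ u x‖ₑ ^ 2 ∂μ) * ∫⁻ x, ‖u x‖ₑ ^ 2 ∂μ := by
  have : FiniteDimensional ℝ E := .of_finrank_pos (by lia)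
  have hconj : Real.HolderConjugate (finrank ℝ E) 2 := by
    simpa only [hE, Nat.cast_ofNat] using Real.HolderConjugate.two_two
  refine ⟨lintegralPowLePowLIntegralFDerivConst μ 2 * 4, fun u hu h2u ↦ ?_⟩
  have sobolev := lintegral_pow_le_pow_lintegral_fderiv μ (hu.norm_sq ℝ)
    (h2u.comp_left (g := (‖·‖ ^ 2)) (by simp)) hconj
  simp only [ENNReal.rpow_two, enorm_pow, enorm_norm, ← pow_mul] at sobolev
  refine sobolev.trans ?_
  rw [ENNReal.coe_mul, ENNReal.coe_ofNat, mul_assoc, mul_assoc, ← mul_assoc 4]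
  gcongr
  exact sq_lintegral_enorm_fderiv_norm_sq_le μ hu

theorem exists_lintegral_enorm_rpow_critical_le (hE : 2 < finrank ℝ E) :
    ∃ C : ℝ≥0, ∀ u : E → F, ContDiff ℝ 1 u → HasCompactSupport u →
      (∫⁻ x, ‖u x‖ₑ ^ (2 * finrank ℝ E / (finrank ℝ E - 2) : ℝ) ∂μ) ^
          (1 - 2 / finrank ℝ E : ℝ) ≤ C * ∫⁻ x, ‖fderiv ℝ u x‖ₑ ^ 2 ∂μ := by
  have : FiniteDimensional ℝ E := .of_finrank_pos (by lia)
  have hn : (2 : ℝ) < finrank ℝ E := mod_cast hE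
  set n := (finrank ℝ E : ℝ)
  have hn2 : 0 < n - 2 := sub_pos.2 hn
  obtain ⟨p, hp⟩ : ∃ p : ℝ≥0, (p : ℝ) = 2 * n / (n - 2) := ⟨.mk _ (by positivity), rfl⟩
  have hp0 : p ≠ 0 := by
    rw [← NNReal.coe_ne_zero, hp]
    positivity
  have critical : (p : ℝ)⁻¹ = (2 : ℝ≥0)⁻¹ - n⁻¹ := by
    rw [hp, NNReal.coe_inv, NNReal.coe_ofNat]
    field_simp
  let C := eLpNormLESNormFDerivOfEqInnerConst μ (2 : ℝ≥0)
  refine ⟨C ^ 2, fun u hu h2u ↦ ?_⟩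
  have sobolev := eLpNorm_le_eLpNorm_fderiv_of_eq_inner μ hu h2u one_le_two (by lia) critical
  calc (∫⁻ x, ‖u x‖ₑ ^ (2 * n / (n - 2)) ∂μ) ^ (1 - 2 / n)
    _ = eLpNorm u p μ ^ 2 := by
      rw [eLpNorm_nnreal_eq_lintegral hp0, ← ENNReal.rpow_mul_natCast, hp]
      congr 1
      push_cast
      field_simp
    _ ≤ (C * eLpNorm (fderiv ℝ u) (2 : ℝ≥0) μ) ^ 2 := by
      gcongr
    _ = (C ^ 2 : ℝ≥0) * ∫⁻ x, ‖fderiv ℝ u x‖ₑ ^ 2 ∂μ := by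
      have := eLpNorm_nnreal_pow_eq_lintegral (f := fderiv ℝ u) (μ := μ) two_ne_zero
      simp only [NNReal.coe_ofNat, ENNReal.rpow_two] at this
      rw [mul_pow, this, ENNReal.coe_pow]

theorem exists_lintegral_enorm_rpow_le_of_two_lt_finrank (hE : 2 < finrank ℝ E) :
    ∃ C : ℝ≥0, ∀ u : E → F, ContDiff ℝ 1 u → HasCompactSupport u →
      ∫⁻ x, ‖u x‖ₑ ^ (2 * (1 + 2 / finrank ℝ E) : ℝ) ∂μ ≤
        C * (∫⁻ x, ‖fderiv ℝ u x‖ₑ ^ 2 ∂μ) *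
          (∫⁻ x, ‖u x‖ₑ ^ 2 ∂μ) ^ (2 / finrank ℝ E : ℝ) := by
  obtain ⟨C, hC⟩ := exists_lintegral_enorm_rpow_critical_le F μ hE
  refine ⟨C, fun u hu h2u ↦ ?_⟩
  have hn : (2 : ℝ) < finrank ℝ E := mod_cast hE
  have sobolev := hC u hu h2u
  set n := (finrank ℝ E : ℝ)
  have hn2 : 0 < n - 2 := sub_pos.2 hn
  have interpolation : ∫⁻ x, ‖u x‖ₑ ^ (2 * (1 + 2 / n)) ∂μ ≤
      (∫⁻ x, ‖u x‖ₑ ^ (2 * n / (n - 2)) ∂μ) ^ (1 - 2 / n) *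
        (∫⁻ x, ‖u x‖ₑ ^ (2 : ℝ) ∂μ) ^ (2 / n) := by
    refine lintegral_rpow_le_lintegral_rpow_mul_lintegral_rpow hu.continuous.enorm.aemeasurable
      (by positivity) zero_le_two ?_ (by positivity) (sub_add_cancel ..) ?_
    · rw [sub_nonneg, div_le_one (by positivity)]
      exact hn.le
    · field_simp
  simp only [ENNReal.rpow_two] at interpolation
  exact interpolation.trans (by gcongr)

theorem exists_lintegral_enorm_rpow_le [FiniteDimensional ℝ E] [Nontrivial E] :
    ∃ C : ℝ≥0, ∀ u : E → F, ContDiff ℝ 1 u → HasCompactSupport u →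
      ∫⁻ x, ‖u x‖ₑ ^ (2 * (1 + 2 / finrank ℝ E) : ℝ) ∂μ ≤
        C * (∫⁻ x, ‖fderiv ℝ u x‖ₑ ^ 2 ∂μ) *
          (∫⁻ x, ‖u x‖ₑ ^ 2 ∂μ) ^ (2 / finrank ℝ E : ℝ) := by
  have : 0 < finrank ℝ E := finrank_pos
  obtain hE | hE | hE : finrank ℝ E = 1 ∨ finrank ℝ E = 2 ∨ 2 < finrank ℝ E := by lia
  · have six : (2 * (1 + 2 / (1 : ℕ)) : ℝ) = (6 : ℕ) := by norm_num
    have two : (2 / (1 : ℕ) : ℝ) = (2 : ℕ) := by norm_num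
    rw [hE, six, two]
    simpa only [ENNReal.rpow_natCast] using
      exists_lintegral_enorm_pow_six_le_of_finrank_eq_one F μ hE
  · have four : (2 * (1 + 2 / (2 : ℕ)) : ℝ) = (4 : ℕ) := by norm_num
    have one : (2 / (2 : ℕ) : ℝ) = 1 := by norm_num
    rw [hE, four, one]
    simpa only [ENNReal.rpow_natCast, ENNReal.rpow_one] using
      exists_lintegral_enorm_pow_four_le_of_finrank_eq_two F μ hE
  · exact exists_lintegral_enorm_rpow_le_of_two_lt_finrank F μ hE

theorem sobolev_uncertainty_general [FiniteDimensional ℝ E] [Nontrivial E] :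
    ∃ K : ℝ, 0 < K ∧ ∀ u : E → F, ContDiff ℝ 1 u → HasCompactSupport u →
      K * ∫ x, ‖u x‖ ^ (2 * (1 + 2 / finrank ℝ E) : ℝ) ∂μ ≤
        (∫ x, ‖fderiv ℝ u x‖ ^ 2 ∂μ) * (∫ x, ‖u x‖ ^ 2 ∂μ) ^ (2 / finrank ℝ E : ℝ) := by
  obtain ⟨C, hC⟩ := exists_lintegral_enorm_rpow_le F μ
  refine ⟨((C : ℝ) + 1)⁻¹, by positivity, fun u hu h2u ↦ ?_⟩
  have bound := hC u hu h2u
  rw [← ofReal_integral_norm_rpow hu.continuous h2u (by positivity),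
    ← ofReal_integral_norm_sq hu.continuous h2u,
    ← ofReal_integral_norm_sq (hu.continuous_fderiv one_ne_zero) (h2u.fderiv ℝ),
    ENNReal.ofReal_rpow_of_nonneg (by positivity) (by positivity), ← ENNReal.ofReal_coe_nnreal,
    ← ENNReal.ofReal_mul (by positivity), ← ENNReal.ofReal_mul (by positivity),
    ENNReal.ofReal_le_ofReal_iff (by positivity), mul_assoc] at bound
  rw [inv_mul_le_iff₀ (by positivity)]
  refine bound.trans ?_
  gcongr
  exact le_add_of_nonneg_right zero_le_one

end Sobolev

section Gradient

theorem sq_opNorm_le_sum_sq_norm_apply {𝕜 ι E F : Type*} [RCLike 𝕜] [Fintype ι]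
    [NormedAddCommGroup E] [InnerProductSpace 𝕜 E] [NormedAddCommGroup F] [NormedSpace 𝕜 F]
    (b : OrthonormalBasis ι 𝕜 E) (L : E →L[𝕜] F) : ‖L‖ ^ 2 ≤ ∑ i, ‖L (b i)‖ ^ 2 := by
  rw [← Real.le_sqrt (norm_nonneg _) (by positivity)]
  refine L.opNorm_le_bound (Real.sqrt_nonneg _) fun v ↦ ?_
  calc ‖L v‖
    _ = ‖∑ i, b.repr v i • L (b i)‖ := by simp_rw [← map_smul, ← map_sum, b.sum_repr]
    _ ≤ ∑ i, ‖L (b i)‖ * ‖b.repr v i‖ := norm_sum_le_of_le _ fun i _ ↦ by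
      rw [norm_smul, mul_comm]
    _ ≤ √(∑ i, ‖L (b i)‖ ^ 2) * √(∑ i, ‖b.repr v i‖ ^ 2) :=
      Real.sum_mul_le_sqrt_mul_sqrt _ _ _
    _ = √(∑ i, ‖L (b i)‖ ^ 2) * ‖v‖ := by
      rw [← EuclideanSpace.norm_eq, b.repr.norm_map]

variable {d : ℕ} {u : EuclideanSpace ℝ (Fin d) → ℂ}

theorem integrable_gradSq (hu : ContDiff ℝ 1 u) (h2u : HasCompactSupport u) :
    Integrable (gradSq u) := by
  have hcf : Continuous (fderiv ℝ u) := hu.continuous_fderiv one_ne_zero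
  have hcg : Continuous (gradSq u) := continuous_finsetSum _ fun _ _ ↦
    (hcf.clm_apply continuous_const).norm.pow 2
  have support_subset (x) : gradSq u x ≠ 0 → fderiv ℝ u x ≠ 0 :=
    mt fun hx ↦ by simp [gradSq, hx]
  exact hcg.integrable_of_hasCompactSupport ((h2u.fderiv ℝ).mono support_subset)

theorem integral_sq_norm_fderiv_le_integral_gradSq (hu : ContDiff ℝ 1 u)
    (h2u : HasCompactSupport u) : ∫ x, ‖fderiv ℝ u x‖ ^ 2 ≤ ∫ x, gradSq u x := by
  refine integral_mono_of_nonneg (.of_forall fun _ ↦ by positivity) (integrable_gradSq hu h2u)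
    (.of_forall fun x ↦ ?_)
  simpa only [gradSq, EuclideanSpace.basisFun_apply] using
    sq_opNorm_le_sum_sq_norm_apply (EuclideanSpace.basisFun (Fin d) ℝ) (fderiv ℝ u x)

end Gradient

/-- **Sobolev-type uncertainty principle**:
`(∫ |∇u|²) (∫ |u|²)^{2/d} ≥ K ∫ |u|^{2(1+2/d)}` for `C¹` compactly supported `u`. -/
theorem sobolev_uncertainty (d : ℕ) (hd : 1 ≤ d) :
    ∃ K : ℝ, 0 < K ∧
      ∀ u : EuclideanSpace ℝ (Fin d) → ℂ,
        ContDiff ℝ 1 u → HasCompactSupport u →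
        (∫ x, gradSq u x) * (∫ x, ‖u x‖ ^ 2) ^ (2 / (d : ℝ))
          ≥ K * ∫ x, ‖u x‖ ^ (2 * (1 + 2 / (d : ℝ))) := by
  have : Nontrivial (EuclideanSpace ℝ (Fin d)) :=
    nontrivial_of_finrank_pos (R := ℝ) (by rwa [finrank_euclideanSpace_fin])
  obtain ⟨K, hK, bound⟩ :=
    sobolev_uncertainty_general ℂ (volume : Measure (EuclideanSpace ℝ (Fin d)))
  rw [finrank_euclideanSpace_fin] at bound
  refine ⟨K, hK, fun u hu h2u ↦ (bound u hu h2u).trans ?_⟩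
  exact mul_le_mul_of_nonneg_right (integral_sq_norm_fderiv_le_integral_gradSq hu h2u)
    (by positivity)
end

section
/- For every integer d ≥ 1 there exists a constant K > 0 depending only on d such that: for every N ≥ 1 and every family u_1, …, u_N of continuously differentiable, compactly supported functions from ℝ^d to ℂ with ∫_{ℝ^d} |u_n|² = 1 for each n (normalized but not necessarily orthogonal), one has Σ_{n=1}^N ∫_{ℝ^d} |∇u_n(x)|² dx ≥ (K / N^{2/d}) ∫_{ℝ^d} (Σ_{n=1}^N |u_n(x)|²)^{1+2/d} dx. -/
open MeasureTheory
open scoped BigOperators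

/-!
The family `u = (u₁, …, u_N)` is a single function with values in `ℂ^N`, its density `Σₙ |uₙ|²` is
`|u|²`, and the theorem becomes the Gagliardo–Nirenberg inequality
`∫ |u|^(2 + 4/d) ≤ C (∫ |u|²)^(2/d) ∫ |∇u|²` for vector-valued `u`, since `∫ |u|² = N`. The constant
does not depend on `N` because the only use of the target space is `|∇|u|^s| ≤ s |u|^(s-1) |∇u|`,
which reduces the inequality to an `L¹` Sobolev inequality for the scalar function `|u|^s`.

For `d ≥ 2` the exponent `s` is chosen so that the Sobolev inequality controls `∫ |u|^(2 + 4/d)`.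
The factor `∫ |u|^(2s-2)` produced by Cauchy–Schwarz is interpolated between `∫ |u|²` and
`∫ |u|^(2 + 4/d)`, and the latter, which is finite, is absorbed into the left-hand side. For `d = 1`
the Sobolev inequality is the sup bound `|v| ≤ ∫ |v'|`, applied to `v = |u|²`.
-/

open Module (finrank)
open scoped ENNReal NNReal

theorem ennreal_le_rpow_inv_mul_of_le_mul_rpow_one_sub {c x y : ℝ≥0∞} {b : ℝ} (hx : x ≠ ∞)
    (hb : 0 < b) (h : x ≤ c * y ^ b * x ^ (1 - b)) : x ≤ c ^ b⁻¹ * y := by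
  rcases eq_or_ne x 0 with rfl | hx0
  · exact zero_le
  have hpow : x ^ b * x ^ (1 - b) ≤ c * y ^ b * x ^ (1 - b) := by
    rwa [← ENNReal.rpow_add _ _ hx0 hx, add_sub_cancel, ENNReal.rpow_one]
  have hxb : x ^ b ≤ c * y ^ b :=
    (ENNReal.mul_le_mul_iff_left (by simp [ENNReal.rpow_eq_zero_iff, hx0, hx])
      (by simp [ENNReal.rpow_eq_top_iff, hx0, hx])).1 hpow
  calc x ≤ (c * y ^ b) ^ b⁻¹ := (ENNReal.le_rpow_inv_iff hb).2 hxb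
    _ = c ^ b⁻¹ * y := by
      rw [ENNReal.mul_rpow_of_nonneg _ _ (inv_nonneg.2 hb.le), ENNReal.rpow_rpow_inv hb.ne']

theorem lintegral_rpow_add_mul_le {α : Type*} [MeasurableSpace α] {μ : Measure α} {f : α → ℝ≥0∞}
    (hf : AEMeasurable f μ) {a b s t : ℝ} (ha : 0 ≤ a) (hb : 0 ≤ b) (hs : 0 ≤ s) (ht : 0 ≤ t)
    (hst : s + t = 1) :
    ∫⁻ x, f x ^ (a * s + b * t) ∂μ ≤ (∫⁻ x, f x ^ a ∂μ) ^ s * (∫⁻ x, f x ^ b ∂μ) ^ t := by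
  calc ∫⁻ x, f x ^ (a * s + b * t) ∂μ = ∫⁻ x, (f x ^ a) ^ s * (f x ^ b) ^ t ∂μ := by
        refine lintegral_congr fun x => ?_
        rw [ENNReal.rpow_add_of_nonneg _ _ (mul_nonneg ha hs) (mul_nonneg hb ht),
          ENNReal.rpow_mul, ENNReal.rpow_mul]
    _ ≤ _ := ENNReal.lintegral_mul_norm_pow_le (hf.pow_const a) (hf.pow_const b) hs ht hst

theorem opNorm_sq_le_sum_norm_sq_orthonormalBasis {𝕜 ι E F : Type*} [RCLike 𝕜] [Fintype ι]
    [NormedAddCommGroup E] [InnerProductSpace 𝕜 E] [SeminormedAddCommGroup F] [NormedSpace 𝕜 F]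
    (b : OrthonormalBasis ι 𝕜 E) (L : E →L[𝕜] F) : ‖L‖ ^ 2 ≤ ∑ i, ‖L (b i)‖ ^ 2 := by
  refine (Real.le_sqrt (norm_nonneg L) (by positivity)).1 <|
    L.opNorm_le_bound (Real.sqrt_nonneg _) fun y => ?_
  calc ‖L y‖ = ‖∑ i, b.repr y i • L (b i)‖ := by
        conv_lhs => rw [← b.sum_repr y]
        simp only [map_sum, map_smul]
    _ ≤ ∑ i, ‖L (b i)‖ * ‖b.repr y i‖ :=
        norm_sum_le_of_le _ fun i _ => by rw [norm_smul, mul_comm]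
    _ ≤ √(∑ i, ‖L (b i)‖ ^ 2) * √(∑ i, ‖b.repr y i‖ ^ 2) := Real.sum_mul_le_sqrt_mul_sqrt _ _ _
    _ = √(∑ i, ‖L (b i)‖ ^ 2) * ‖y‖ := by rw [← EuclideanSpace.norm_eq, b.repr.norm_map]

theorem hasCompactSupport_toLp {ι X G : Type*} [Finite ι] [TopologicalSpace X] [AddCommGroup G]
    {u : ι → X → G} (p : ℝ≥0∞) (hu : ∀ n, HasCompactSupport (u n)) :
    HasCompactSupport fun x => WithLp.toLp p (u · x) := by
  have hK : IsCompact (⋃ n, tsupport (u n)) := isCompact_iUnion fun n => (hu n).isCompact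
  have hK_closed : IsClosed (⋃ n, tsupport (u n)) :=
    isClosed_iUnion_of_finite fun n => isClosed_tsupport (u n)
  refine .intro' hK hK_closed fun x hx => ?_
  have hzero (n : ι) : u n x = 0 :=
    image_eq_zero_of_notMem_tsupport fun hn => hx (Set.mem_iUnion_of_mem n hn)
  exact congrArg (WithLp.toLp p) (funext hzero)

section CompactSupport

variable {X F : Type*} [TopologicalSpace X] [NormedAddCommGroup F] {g : X → F} {q : ℝ}

theorem hasCompactSupport_norm_rpow (hg : HasCompactSupport g) (hq : q ≠ 0) :
    HasCompactSupport fun x => ‖g x‖ ^ q :=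
  hg.comp_left (g := fun z : F => ‖z‖ ^ q) (by simp [hq])

theorem enorm_norm_rpow (z : F) (hq : 0 ≤ q) : ‖‖z‖ ^ q‖ₑ = ‖z‖ₑ ^ q := by
  rw [Real.enorm_rpow_of_nonneg (norm_nonneg z) hq, enorm_norm]

variable [MeasurableSpace X] [OpensMeasurableSpace X] {μ : Measure X}
  [IsFiniteMeasureOnCompacts μ]

theorem integrable_norm_rpow_of_hasCompactSupport_s9 (hg : Continuous g) (hsupp : HasCompactSupport g)
    (hq : 0 < q) : Integrable (fun x => ‖g x‖ ^ q) μ :=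
  (hg.norm.rpow_const fun _ => Or.inr hq.le).integrable_of_hasCompactSupport
    (hasCompactSupport_norm_rpow hsupp hq.ne')

theorem integrable_norm_sq_of_hasCompactSupport (hg : Continuous g) (hsupp : HasCompactSupport g) :
    Integrable (fun x => ‖g x‖ ^ 2) μ := by
  simpa only [Real.rpow_two] using integrable_norm_rpow_of_hasCompactSupport_s9 hg hsupp two_pos

theorem lintegral_enorm_rpow_eq_ofReal_integral (hg : Continuous g) (hsupp : HasCompactSupport g)
    (hq : 0 < q) : ∫⁻ x, ‖g x‖ₑ ^ q ∂μ = ENNReal.ofReal (∫ x, ‖g x‖ ^ q ∂μ) := by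
  rw [ofReal_integral_eq_lintegral_ofReal (integrable_norm_rpow_of_hasCompactSupport_s9 hg hsupp hq)
    (.of_forall fun x => by positivity)]
  refine lintegral_congr fun x => ?_
  rw [← enorm_norm_rpow _ hq.le, Real.enorm_eq_ofReal (by positivity)]

end CompactSupport

section NormRpow

variable {E : Type*} [NormedAddCommGroup E] [NormedSpace ℝ E] [MeasurableSpace E] [BorelSpace E]
  {F : Type*} [NormedAddCommGroup F] [InnerProductSpace ℝ F] (μ : Measure E) {u : E → F} {p : ℝ}
  {s : ℝ≥0}

theorem lintegral_enorm_fderiv_norm_rpow_le (hu : ContDiff ℝ 1 u) (hs : 1 < s) :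
    ∫⁻ x, ‖fderiv ℝ (fun x => ‖u x‖ ^ (s : ℝ)) x‖ₑ ∂μ ≤
      s * ((∫⁻ x, ‖u x‖ₑ ^ (2 * ((s : ℝ) - 1)) ∂μ) *
        ∫⁻ x, ‖fderiv ℝ u x‖ₑ ^ (2 : ℝ) ∂μ) ^ (1 / 2 : ℝ) := by
  have hu_meas : Measurable fun x => ‖u x‖ₑ := hu.continuous.enorm.measurable
  have hDu_meas : Measurable fun x => ‖fderiv ℝ u x‖ₑ :=
    (hu.continuous_fderiv one_ne_zero).enorm.measurable
  calc ∫⁻ x, ‖fderiv ℝ (fun x => ‖u x‖ ^ (s : ℝ)) x‖ₑ ∂μ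
      ≤ ∫⁻ x, s * (‖u x‖ₑ ^ ((s : ℝ) - 1) * ‖fderiv ℝ u x‖ₑ) ∂μ := by
        refine lintegral_mono fun x => ?_
        rw [← mul_assoc]
        exact enorm_fderiv_norm_rpow_le (hu.differentiable one_ne_zero) hs
    _ = s * ∫⁻ x, ‖u x‖ₑ ^ ((s : ℝ) - 1) * ‖fderiv ℝ u x‖ₑ ∂μ :=
        lintegral_const_mul _ (by fun_prop)
    _ ≤ s * ((∫⁻ x, (‖u x‖ₑ ^ ((s : ℝ) - 1)) ^ (2 : ℝ) ∂μ) ^ (1 / 2 : ℝ) *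
          (∫⁻ x, ‖fderiv ℝ u x‖ₑ ^ (2 : ℝ) ∂μ) ^ (1 / 2 : ℝ)) := by
        gcongr
        exact ENNReal.lintegral_mul_le_Lp_mul_Lq μ .two_two
          (hu_meas.pow_const _).aemeasurable hDu_meas.aemeasurable
    _ = _ := by
        rw [ENNReal.mul_rpow_of_nonneg _ _ one_half_pos.le]
        simp only [← ENNReal.rpow_mul, mul_comm (2 : ℝ)]

variable [FiniteDimensional ℝ E] [μ.IsAddHaarMeasure]

theorem lintegral_enorm_rpow_mul_le_of_holderConjugate (hu : ContDiff ℝ 1 u)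
    (hsupp : HasCompactSupport u) (hp : (finrank ℝ E : ℝ).HolderConjugate p) (hs : 1 < s) :
    ∫⁻ x, ‖u x‖ₑ ^ (s * p) ∂μ ≤
      lintegralPowLePowLIntegralFDerivConst μ p * s ^ p *
        ((∫⁻ x, ‖u x‖ₑ ^ (2 * ((s : ℝ) - 1)) ∂μ) *
          ∫⁻ x, ‖fderiv ℝ u x‖ₑ ^ (2 : ℝ) ∂μ) ^ (p / 2) := by
  have hp0 : 0 ≤ p := hp.symm.nonneg
  calc ∫⁻ x, ‖u x‖ₑ ^ (s * p) ∂μ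
      = ∫⁻ x, ‖‖u x‖ ^ (s : ℝ)‖ₑ ^ p ∂μ := by
        simp only [enorm_norm_rpow _ s.coe_nonneg, ENNReal.rpow_mul]
    _ ≤ lintegralPowLePowLIntegralFDerivConst μ p *
          (∫⁻ x, ‖fderiv ℝ (fun x => ‖u x‖ ^ (s : ℝ)) x‖ₑ ∂μ) ^ p :=
        lintegral_pow_le_pow_lintegral_fderiv μ (hu.norm_rpow (NNReal.one_lt_coe.2 hs))
          (hasCompactSupport_norm_rpow hsupp (by positivity)) hp
    _ ≤ lintegralPowLePowLIntegralFDerivConst μ p *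
          (s * ((∫⁻ x, ‖u x‖ₑ ^ (2 * ((s : ℝ) - 1)) ∂μ) *
            ∫⁻ x, ‖fderiv ℝ u x‖ₑ ^ (2 : ℝ) ∂μ) ^ (1 / 2 : ℝ)) ^ p := by
        grw [lintegral_enorm_fderiv_norm_rpow_le μ hu hs]
    _ = _ := by
        rw [ENNReal.mul_rpow_of_nonneg _ _ hp0, ← ENNReal.rpow_mul, one_div_mul_eq_div, mul_assoc]

theorem lintegral_enorm_rpow_le_mul_rpow_one_sub (hu : ContDiff ℝ 1 u)
    (hsupp : HasCompactSupport u) (hp : (finrank ℝ E : ℝ).HolderConjugate p)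
    (hs : s * p = 2 + 4 / finrank ℝ E) :
    ∫⁻ x, ‖u x‖ₑ ^ (2 + 4 / finrank ℝ E : ℝ) ∂μ ≤
      lintegralPowLePowLIntegralFDerivConst μ p * s ^ p *
        ((∫⁻ x, ‖u x‖ₑ ^ (2 : ℝ) ∂μ) ^ (2 / finrank ℝ E : ℝ) *
          ∫⁻ x, ‖fderiv ℝ u x‖ₑ ^ (2 : ℝ) ∂μ) ^ (p / 2) *
        (∫⁻ x, ‖u x‖ₑ ^ (2 + 4 / finrank ℝ E : ℝ) ∂μ) ^ (1 - p / 2) := by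
  have h_sobolev := lintegral_enorm_rpow_mul_le_of_holderConjugate (s := s) μ hu hsupp hp
  rw [hs] at h_sobolev
  set n : ℝ := (finrank ℝ E : ℝ)
  have hn : 2 ≤ n := Nat.ofNat_le_cast.2 (Nat.one_lt_cast.1 hp.lt)
  have hn1 : n - 1 ≠ 0 := by linarith
  have hp0 : 0 < p := hp.symm.pos
  have hp_eq : p = n / (n - 1) := hp.conjugate_eq
  have hs_eq : (s : ℝ) = (2 + 4 / n) * (n - 1) / n := by
    rw [← hs, hp_eq]
    field_simp
  have hs1 : 1 < s := by
    rw [← NNReal.coe_lt_coe, NNReal.coe_one, hs_eq, lt_div_iff₀ (by positivity)]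
    field_simp
    nlinarith
  have h_interp : ∫⁻ x, ‖u x‖ₑ ^ (2 * ((s : ℝ) - 1)) ∂μ ≤
      (∫⁻ x, ‖u x‖ₑ ^ (2 : ℝ) ∂μ) ^ (2 / n) *
        (∫⁻ x, ‖u x‖ₑ ^ (2 + 4 / n) ∂μ) ^ (1 - 2 / n) := by
    have hexp : 2 * ((s : ℝ) - 1) = 2 * (2 / n) + (2 + 4 / n) * (1 - 2 / n) := by
      rw [hs_eq]
      field_simp
      ring
    rw [hexp]
    exact lintegral_rpow_add_mul_le hu.continuous.enorm.measurable.aemeasurable zero_le_two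
      (by positivity) (by positivity) (sub_nonneg.2 ((div_le_one (by positivity)).2 hn))
      (add_sub_cancel _ _)
  have hexp : (1 - 2 / n) * (p / 2) = 1 - p / 2 := by
    rw [hp_eq]
    field_simp
    ring
  grw [h_sobolev hs1, h_interp, mul_right_comm ((∫⁻ x, ‖u x‖ₑ ^ (2 : ℝ) ∂μ) ^ (2 / n)),
    ENNReal.mul_rpow_of_nonneg _ (_ ^ _) (by positivity), ← ENNReal.rpow_mul _ _ (p / 2), hexp,
    ← mul_assoc]

end NormRpow

section GagliardoNirenberg

variable {E : Type*} [NormedAddCommGroup E] [NormedSpace ℝ E] [MeasurableSpace E] [BorelSpace E]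
  [FiniteDimensional ℝ E] (μ : Measure E) [μ.IsAddHaarMeasure]

theorem exists_enorm_le_lintegral_enorm_fderiv_of_finrank_eq_one (F : Type*)
    [NormedAddCommGroup F] [NormedSpace ℝ F] (hE : finrank ℝ E = 1) :
    ∃ C : ℝ≥0, ∀ v : E → F, ContDiff ℝ 1 v → HasCompactSupport v →
      ∀ x, ‖v x‖ₑ ≤ C * ∫⁻ y, ‖fderiv ℝ v y‖ₑ ∂μ := by
  let L : ℝ ≃L[ℝ] E := .ofFinrankEq (by simp [hE])
  have hL : Measure.map L volume = (Measure.map L volume).addHaarScalarFactor μ • μ :=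
    Measure.isAddLeftInvariant_eq_smul _ μ
  set c := (Measure.map L volume).addHaarScalarFactor μ
  refine ⟨‖L 1‖₊ * c, fun v hv hsupp x => ?_⟩
  have hDv_meas : Measurable fun y => ‖fderiv ℝ v y‖ₑ :=
    (hv.continuous_fderiv one_ne_zero).enorm.measurable
  have hderiv (t : ℝ) : deriv (v ∘ L) t = fderiv ℝ v (L t) (L 1) :=
    ((hv.differentiable one_ne_zero (L t)).hasFDerivAt.comp_hasDerivAt t
      L.toContinuousLinearMap.hasDerivAt).deriv
  calc ‖v x‖ₑ = ‖(v ∘ L) (L.symm x)‖ₑ := by simp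
    _ ≤ ∫⁻ t in Set.Iic (L.symm x), ‖deriv (v ∘ L) t‖ₑ :=
        (hsupp.comp_homeomorph L.toHomeomorph).enorm_le_lintegral_Ici_deriv
          (hv.comp L.contDiff) _
    _ ≤ ∫⁻ t, ‖deriv (v ∘ L) t‖ₑ := setLIntegral_le_lintegral _ _
    _ ≤ ∫⁻ t, ‖L 1‖ₑ * ‖fderiv ℝ v (L t)‖ₑ := by
        refine lintegral_mono fun t => ?_
        rw [hderiv, mul_comm]
        exact ContinuousLinearMap.le_opENorm _ _
    _ = ‖L 1‖ₑ * ∫⁻ y, ‖fderiv ℝ v y‖ₑ ∂(Measure.map L volume) := by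
        rw [lintegral_const_mul _ (by fun_prop),
          lintegral_map hDv_meas L.continuous.measurable]
    _ = ↑(‖L 1‖₊ * c) * ∫⁻ y, ‖fderiv ℝ v y‖ₑ ∂μ := by
        rw [hL, lintegral_smul_measure, ENNReal.coe_mul, mul_assoc]
        rfl

theorem exists_lintegral_gagliardoNirenberg_of_finrank_eq_one (hE : finrank ℝ E = 1) :
    ∃ C : ℝ≥0, ∀ (F : Type*) [NormedAddCommGroup F] [InnerProductSpace ℝ F] (u : E → F),
      ContDiff ℝ 1 u → HasCompactSupport u →
      ∫⁻ x, ‖u x‖ₑ ^ (6 : ℝ) ∂μ ≤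
        C * ((∫⁻ x, ‖u x‖ₑ ^ (2 : ℝ) ∂μ) ^ (2 : ℝ) * ∫⁻ x, ‖fderiv ℝ u x‖ₑ ^ (2 : ℝ) ∂μ) := by
  obtain ⟨c, hc⟩ := exists_enorm_le_lintegral_enorm_fderiv_of_finrank_eq_one μ ℝ hE
  refine ⟨(c * 2) ^ 2, fun F _ _ u hu hsupp => ?_⟩
  have hu_meas : Measurable fun x => ‖u x‖ₑ := hu.continuous.enorm.measurable
  set M := ∫⁻ x, ‖u x‖ₑ ^ (2 : ℝ) ∂μ
  set G := ∫⁻ x, ‖fderiv ℝ u x‖ₑ ^ (2 : ℝ) ∂μ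
  have hsup (x : E) : ‖u x‖ₑ ^ (2 : ℝ) ≤ c * (2 * (M * G) ^ (1 / 2 : ℝ)) := by
    have hv := hc (fun x => ‖u x‖ ^ (2 : ℝ)) (hu.norm_rpow one_lt_two)
      (hasCompactSupport_norm_rpow hsupp two_ne_zero) x
    rw [enorm_norm_rpow _ zero_le_two] at hv
    have hDv := lintegral_enorm_fderiv_norm_rpow_le μ hu (s := 2) one_lt_two
    rw [NNReal.coe_ofNat, show 2 * ((2 : ℝ) - 1) = 2 by norm_num] at hDv
    exact hv.trans (mul_le_mul_right hDv _)
  calc ∫⁻ x, ‖u x‖ₑ ^ (6 : ℝ) ∂μ = ∫⁻ x, (‖u x‖ₑ ^ (2 : ℝ)) ^ 2 * ‖u x‖ₑ ^ (2 : ℝ) ∂μ := by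
        refine lintegral_congr fun x => ?_
        simp_rw [← ENNReal.rpow_natCast, ← ENNReal.rpow_mul]
        rw [← ENNReal.rpow_add_of_nonneg] <;> norm_num
    _ ≤ ∫⁻ x, (c * (2 * (M * G) ^ (1 / 2 : ℝ))) ^ 2 * ‖u x‖ₑ ^ (2 : ℝ) ∂μ := by
        gcongr with x
        exact hsup x
    _ = (c * (2 * (M * G) ^ (1 / 2 : ℝ))) ^ 2 * M :=
        lintegral_const_mul _ (by fun_prop)
    _ = ((c * 2) ^ 2 : ℝ≥0) * (M ^ (2 : ℝ) * G) := by
        have hsq (y : ℝ≥0∞) : (y ^ (1 / 2 : ℝ)) ^ 2 = y := by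
          rw [← ENNReal.rpow_natCast, ← ENNReal.rpow_mul]; norm_num
        simp only [mul_pow, hsq, ENNReal.rpow_two]
        push_cast
        ring

theorem exists_lintegral_gagliardoNirenberg_of_two_le_finrank (hE : 2 ≤ finrank ℝ E) :
    ∃ C : ℝ≥0, ∀ (F : Type*) [NormedAddCommGroup F] [InnerProductSpace ℝ F] (u : E → F),
      ContDiff ℝ 1 u → HasCompactSupport u →
      ∫⁻ x, ‖u x‖ₑ ^ (2 + 4 / finrank ℝ E : ℝ) ∂μ ≤
        C * ((∫⁻ x, ‖u x‖ₑ ^ (2 : ℝ) ∂μ) ^ (2 / finrank ℝ E : ℝ) *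
          ∫⁻ x, ‖fderiv ℝ u x‖ₑ ^ (2 : ℝ) ∂μ) := by
  have hp := Real.HolderConjugate.conjExponent (p := finrank ℝ E) (by exact_mod_cast hE)
  set p := Real.conjExponent (finrank ℝ E)
  have hp0 : 0 < p := hp.symm.pos
  obtain ⟨s, hs⟩ : ∃ s : ℝ≥0, (s : ℝ) = (2 + 4 / finrank ℝ E) / p := ⟨⟨_, by positivity⟩, rfl⟩
  refine ⟨(lintegralPowLePowLIntegralFDerivConst μ p * s ^ p) ^ (p / 2)⁻¹,
    fun F _ _ u hu hsupp => ?_⟩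
  rw [ENNReal.coe_rpow_of_nonneg _ (by positivity), ENNReal.coe_mul,
    ENNReal.coe_rpow_of_nonneg _ hp0.le]
  refine ennreal_le_rpow_inv_mul_of_le_mul_rpow_one_sub ?_ (half_pos hp0) <|
    lintegral_enorm_rpow_le_mul_rpow_one_sub μ hu hsupp hp <|
      (eq_div_iff hp0.ne').1 hs
  rw [lintegral_enorm_rpow_eq_ofReal_integral hu.continuous hsupp (by positivity)]
  exact ENNReal.ofReal_ne_top

theorem exists_lintegral_gagliardoNirenberg (hE : 0 < finrank ℝ E) :
    ∃ C : ℝ≥0, ∀ (F : Type*) [NormedAddCommGroup F] [InnerProductSpace ℝ F] (u : E → F),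
      ContDiff ℝ 1 u → HasCompactSupport u →
      ∫⁻ x, ‖u x‖ₑ ^ (2 + 4 / finrank ℝ E : ℝ) ∂μ ≤
        C * ((∫⁻ x, ‖u x‖ₑ ^ (2 : ℝ) ∂μ) ^ (2 / finrank ℝ E : ℝ) *
          ∫⁻ x, ‖fderiv ℝ u x‖ₑ ^ (2 : ℝ) ∂μ) := by
  obtain hE1 | hE2 := (Nat.succ_le_of_lt hE).eq_or_lt'
  · have hq : (2 + 4 / finrank ℝ E : ℝ) = 6 := by norm_num [hE1]
    have hm : (2 / finrank ℝ E : ℝ) = 2 := by norm_num [hE1]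
    simp only [hq, hm]
    exact exists_lintegral_gagliardoNirenberg_of_finrank_eq_one μ hE1
  · exact exists_lintegral_gagliardoNirenberg_of_two_le_finrank μ hE2

theorem exists_integral_gagliardoNirenberg (hE : 0 < finrank ℝ E) :
    ∃ C : ℝ, 0 < C ∧ ∀ (F : Type*) [NormedAddCommGroup F] [InnerProductSpace ℝ F] (u : E → F),
      ContDiff ℝ 1 u → HasCompactSupport u →
      ∫ x, ‖u x‖ ^ (2 + 4 / finrank ℝ E : ℝ) ∂μ ≤
        C * ((∫ x, ‖u x‖ ^ 2 ∂μ) ^ (2 / finrank ℝ E : ℝ) * ∫ x, ‖fderiv ℝ u x‖ ^ 2 ∂μ) := by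
  obtain ⟨C, hC⟩ := exists_lintegral_gagliardoNirenberg μ hE
  refine ⟨C + 1, by positivity, fun F _ _ u hu hsupp => ?_⟩
  have h := hC F u hu hsupp
  rw [lintegral_enorm_rpow_eq_ofReal_integral hu.continuous hsupp (by positivity),
    lintegral_enorm_rpow_eq_ofReal_integral hu.continuous hsupp two_pos,
    lintegral_enorm_rpow_eq_ofReal_integral (hu.continuous_fderiv one_ne_zero) (hsupp.fderiv ℝ)
      two_pos, ENNReal.ofReal_rpow_of_nonneg (by positivity) (by positivity),
    ← ENNReal.ofReal_mul (by positivity), ← ENNReal.ofReal_coe_nnreal,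
    ← ENNReal.ofReal_mul (by positivity), ENNReal.ofReal_le_ofReal_iff (by positivity)] at h
  simp only [Real.rpow_two] at h
  grw [h]
  gcongr
  simp

end GagliardoNirenberg

section Family

variable {ι : Type*} [Fintype ι] {d : ℕ} {u : ι → EuclideanSpace ℝ (Fin d) → ℂ}

theorem norm_fderiv_toLp_sq_le_sum_gradSq {x : EuclideanSpace ℝ (Fin d)}
    (hu : ∀ n, DifferentiableAt ℝ (u n) x) :
    ‖fderiv ℝ (fun x => (WithLp.toLp 2 (u · x) : EuclideanSpace ℂ ι)) x‖ ^ 2 ≤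
      ∑ n, gradSq (u n) x := by
  set U := fun x => (WithLp.toLp 2 (u · x) : EuclideanSpace ℂ ι)
  have hU : DifferentiableAt ℝ U x := (differentiableAt_piLp 2).2 hu
  have hcoord (n : ι) (v : EuclideanSpace ℝ (Fin d)) : fderiv ℝ U x v n = fderiv ℝ (u n) x v := by
    have hcomp := (PiLp.proj 2 (𝕜 := ℝ) (fun _ : ι => ℂ) n).hasFDerivAt.comp x hU.hasFDerivAt
    exact (DFunLike.congr_fun hcomp.fderiv v).symm
  calc ‖fderiv ℝ U x‖ ^ 2
      ≤ ∑ i, ‖fderiv ℝ U x (EuclideanSpace.basisFun (Fin d) ℝ i)‖ ^ 2 :=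
        opNorm_sq_le_sum_norm_sq_orthonormalBasis _ _
    _ = ∑ i, ∑ n, ‖fderiv ℝ (u n) x (EuclideanSpace.single i 1)‖ ^ 2 := by
        simp only [EuclideanSpace.norm_sq_eq, hcoord, EuclideanSpace.basisFun_apply]
    _ = ∑ n, gradSq (u n) x := Finset.sum_comm

theorem integrable_gradSq_s9 {f : EuclideanSpace ℝ (Fin d) → ℂ} (hf : ContDiff ℝ 1 f)
    (hsupp : HasCompactSupport f) : Integrable (gradSq f) :=
  integrable_finsetSum _ fun i _ => integrable_norm_sq_of_hasCompactSupport
    ((hf.continuous_fderiv one_ne_zero).clm_apply continuous_const)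
    (hsupp.fderiv_apply ℝ (EuclideanSpace.single i 1))

theorem integral_norm_fderiv_toLp_sq_le_sum_integral_gradSq (hu : ∀ n, ContDiff ℝ 1 (u n))
    (hsupp : ∀ n, HasCompactSupport (u n)) :
    ∫ x, ‖fderiv ℝ (fun x => (WithLp.toLp 2 (u · x) : EuclideanSpace ℂ ι)) x‖ ^ 2 ≤
      ∑ n, ∫ x, gradSq (u n) x := by
  have hint (n : ι) : Integrable (gradSq (u n)) := integrable_gradSq_s9 (hu n) (hsupp n)
  rw [← integral_finsetSum _ fun n _ => hint n]
  exact integral_mono_of_nonneg (.of_forall fun x => sq_nonneg _)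
    (integrable_finsetSum _ fun n _ => hint n) (.of_forall fun x =>
      norm_fderiv_toLp_sq_le_sum_gradSq fun n => (hu n).differentiable one_ne_zero x)

end Family

theorem kinetic_bound_normalized_general (d : ℕ) (hd : 1 ≤ d) :
    ∃ K : ℝ, 0 < K ∧
      ∀ (ι : Type*) [Fintype ι] (u : ι → EuclideanSpace ℝ (Fin d) → ℂ),
        (∀ n, ContDiff ℝ 1 (u n)) →
        (∀ n, HasCompactSupport (u n)) →
        K * ∫ x, (∑ n, ‖u n x‖ ^ 2) ^ (1 + 2 / (d : ℝ)) ≤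
          (∑ n, ∫ x, ‖u n x‖ ^ 2) ^ (2 / (d : ℝ)) * ∑ n, ∫ x, gradSq (u n) x := by
  obtain ⟨C, hC0, hC⟩ := exists_integral_gagliardoNirenberg
    (volume : Measure (EuclideanSpace ℝ (Fin d))) (by rwa [finrank_euclideanSpace_fin])
  refine ⟨C⁻¹, inv_pos.2 hC0, fun ι _ u hu hsupp => ?_⟩
  set U := fun x => (WithLp.toLp 2 (u · x) : EuclideanSpace ℂ ι)
  have hU : ContDiff ℝ 1 U := (contDiff_piLp 2).2 hu
  have hUsupp : HasCompactSupport U := hasCompactSupport_toLp 2 hsupp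
  have hU_sq (x : EuclideanSpace ℝ (Fin d)) : ∑ n, ‖u n x‖ ^ 2 = ‖U x‖ ^ 2 :=
    (EuclideanSpace.norm_sq_eq (U x)).symm
  have hdensity : ∫ x, (∑ n, ‖u n x‖ ^ 2) ^ (1 + 2 / (d : ℝ)) = ∫ x, ‖U x‖ ^ (2 + 4 / (d : ℝ)) := by
    simp only [hU_sq, ← Real.rpow_natCast_mul (norm_nonneg _)]
    ring_nf
  have hmass : ∑ n, ∫ x, ‖u n x‖ ^ 2 = ∫ x, ‖U x‖ ^ 2 := by
    simp only [← hU_sq]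
    exact (integral_finsetSum _ fun n _ =>
      integrable_norm_sq_of_hasCompactSupport (hu n).continuous (hsupp n)).symm
  rw [hdensity, hmass, inv_mul_le_iff₀ hC0]
  grw [← integral_norm_fderiv_toLp_sq_le_sum_integral_gradSq hu hsupp]
  simpa only [finrank_euclideanSpace_fin] using hC _ U hU hUsupp

/-- Kinetic energy bound for **normalized** (not necessarily orthogonal) families:
`Σₙ ∫ |∇uₙ|² ≥ (K/N^{2/d}) ∫ (Σₙ |uₙ|²)^{1+2/d}`. -/
theorem kinetic_bound_normalized (d : ℕ) (hd : 1 ≤ d) :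
    ∃ K : ℝ, 0 < K ∧
      ∀ (N : ℕ), 1 ≤ N →
      ∀ u : Fin N → EuclideanSpace ℝ (Fin d) → ℂ,
        (∀ n, ContDiff ℝ 1 (u n)) →
        (∀ n, HasCompactSupport (u n)) →
        (∀ n, (∫ x, ‖u n x‖ ^ 2) = 1) →
        ∑ n, ∫ x, gradSq (u n) x
          ≥ (K / (N : ℝ) ^ (2 / (d : ℝ))) *
              ∫ x, (∑ n, ‖u n x‖ ^ 2) ^ (1 + 2 / (d : ℝ)) := by
  obtain ⟨K, hK, h⟩ := kinetic_bound_normalized_general d hd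
  refine ⟨K, hK, fun N hN u hu hsupp hnorm => ?_⟩
  rw [ge_iff_le, div_mul_eq_mul_div, div_le_iff₀' (by positivity)]
  simpa [hnorm] using h (Fin N) u hu hsupp
end
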